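/- arXiv:0711.2223 — 3 statements merged into one kernel-verified Lean document; each statement's English description precedes it below -/
import Mathlib

section
/- Let g(S_n,k) be the number of Boolean involutions in S_n of rank k and h(S_n) the total number of Boolean involutions in S_n. Then, as formal power series over the integers, ((1 − x²t²)(1 − x) − xt) · Σ_{n≥1,k≥0} g(S_n,k) x^n t^k = x(1 − x²t²), and (1 − 2x − x² + x³) · Σ_{n≥1} h(S_n) x^n = x(1 − x²). -/
/-!
Let the letter `i` stand for the adjacent transposition `s_i`. It acts on involutions by Demazure
conjugation `dem i`: nothing happens at a descent; at an ascent `w` becomes `w s_i` if `w` fixes `i`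
and `i + 1`, and `s_i w s_i` otherwise. Every involution arises from the identity along some word
(`exists_word`), and the lifting property of the Bruhat order gives a subword property: the
involutions below `word l` are the `word l'` for `l'` a sublist of `l`
(`exists_sublist_of_br_word`).

If the letters of `l` are distinct, the subwords are determined by their sets of letters, which can
be read off from the involution as its support; hence the ideal below `word l` is a Boolean lattice
(`isBoolean_word`). Conversely, if `w` is Boolean then it is determined by the adjacent
transpositions below it, and deleting a repeated letter does not change these, so a shortest word
for `w` has distinct letters (`exists_nodup_of_isBoolean`). Each new letter raises the rank by one,
so the rank is the length of the word (`rank_word`).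

It remains to count the involutions given by words with distinct letters. Let `a_n(t)` enumerate by
rank those in `S_n` whose support contains the last letter, and `g_n(t)` all of them, so that
`g_{n+1} = g_n + a_{n+1}`, with `g_0 = 1` and `a_0 = a_1 = 0`. Conjugations by letters differing by
at least two commute, and two neighbouring letters may be exchanged when they act on a permutation
fixing the three points involved. Therefore a word containing the last letter can be rearranged so
that either this letter acts last, or the last letter and then its neighbour act after everything
else, and the remaining word contains the letter below these two (`word_cases`). The two cases are
disjoint and the remaining involution is unique, whence `a_{n+2} = t g_{n+1} + t² a_n`. In
generating functions, `G = x (1 + G) + A` and `A = x t G + x² t² A`, and eliminating `A` gives the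
claim. The second identity is the same computation with the ranks summed out.
-/

/-- The number of inversions of a permutation. -/
def invCount {n : ℕ} (π : Equiv.Perm (Fin n)) : ℕ :=
  (Finset.univ.filter fun p : Fin n × Fin n => p.1 < p.2 ∧ π p.2 < π p.1).card

/-- `w` is an involution: an element of order at most two. -/
def IsInvolution {n : ℕ} (w : Equiv.Perm (Fin n)) : Prop := w * w = 1

/-- A transposition in the symmetric group. -/
def IsTransposition {n : ℕ} (t : Equiv.Perm (Fin n)) : Prop :=
  ∃ i j : Fin n, i ≠ j ∧ t = Equiv.swap i j

/-- The Bruhat order on the symmetric group: `u ≤ w` iff `w = u * t₁ * ⋯ * tₘ` for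
transpositions `t₁, …, tₘ` such that the number of inversions strictly increases
along the partial products `u * t₁ * ⋯ * tᵢ`. -/
def BruhatLE {n : ℕ} (u w : Equiv.Perm (Fin n)) : Prop :=
  ∃ ts : List (Equiv.Perm (Fin n)),
    (∀ t ∈ ts, IsTransposition t) ∧
    w = ts.foldl (· * ·) u ∧
    ∀ k, k + 1 ≤ ts.length →
      invCount ((ts.take k).foldl (· * ·) u) < invCount ((ts.take (k + 1)).foldl (· * ·) u)

/-- An involution `w` is Boolean if the principal order ideal
`B(w) = {u ∈ I(Sₙ) : u ≤ w}` of the Bruhat order on involutions is isomorphic,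
as a poset, to the Boolean lattice of all subsets of some finite set. -/
def IsBooleanInvolution {n : ℕ} (w : Equiv.Perm (Fin n)) : Prop :=
  ∃ (m : ℕ) (f : {u : Equiv.Perm (Fin n) // IsInvolution u ∧ BruhatLE u w} ≃ Finset (Fin m)),
    ∀ a b, BruhatLE a.1 b.1 ↔ f a ⊆ f b

/-- The number of excedances of a permutation: positions `i` with `π i > i`. -/
def excCount {n : ℕ} (π : Equiv.Perm (Fin n)) : ℕ :=
  (Finset.univ.filter fun i : Fin n => i < π i).card

/-- `g(Sₙ, k)`: the number of Boolean involutions in `Sₙ` of rank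
`ρ(w) = (inv(w) + exc(w))/2 = k`. -/
noncomputable def gS (n k : ℕ) : ℕ :=
  Nat.card {w : Equiv.Perm (Fin n) //
    IsInvolution w ∧ IsBooleanInvolution w ∧ (invCount w + excCount w) / 2 = k}

/-- `h(Sₙ)`: the total number of Boolean involutions in `Sₙ`. -/
noncomputable def hS (n : ℕ) : ℕ :=
  Nat.card {w : Equiv.Perm (Fin n) // IsInvolution w ∧ IsBooleanInvolution w}

/-- The generating function `Σ_{n≥1,k≥0} g(Sₙ,k) xⁿ tᵏ`, as a formal power series
over `ℤ` in the variables `X 0 = x` and `X 1 = t`. -/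
noncomputable def Ggen : MvPowerSeries (Fin 2) ℤ :=
  fun d : Fin 2 →₀ ℕ => if 1 ≤ d 0 then (gS (d 0) (d 1) : ℤ) else 0

/-- The generating function `Σ_{n≥1} h(Sₙ) xⁿ`, as a formal power series over `ℤ`. -/
noncomputable def Hgen : PowerSeries ℤ :=
  PowerSeries.mk fun n : ℕ => if 1 ≤ n then (hS n : ℤ) else 0

namespace BoolInv

open Equiv

/-! ### The Bruhat order as a reflexive-transitive closure -/

/-- One upward step of the Bruhat order: right multiplication by a transposition of two
positions `i < j` carrying values in increasing order. -/
def Step {n : ℕ} (u v : Perm (Fin n)) : Prop :=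
  ∃ i j : Fin n, i < j ∧ u i < u j ∧ v = u * swap i j

/-- The Bruhat order as the reflexive-transitive closure of `Step`. -/
def Br {n : ℕ} (u v : Perm (Fin n)) : Prop := Relation.ReflTransGen Step u v

theorem invCount_lt {n : ℕ} (u : Perm (Fin n)) {i j : Fin n} (hij : i < j) (hu : u i < u j) :
    invCount u < invCount (u * swap i j) := by
  unfold invCount
  have hmem : (i, j) ∈ Finset.univ.filter fun p : Fin n × Fin n =>
      p.1 < p.2 ∧ (u * swap i j) p.2 < (u * swap i j) p.1 :=
    Finset.mem_filter.mpr ⟨Finset.mem_univ _, hij, by simpa using hu⟩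
  refine lt_of_le_of_lt ?_ (Finset.card_erase_lt_of_mem hmem)
  -- Apply `swap i j` to both positions, except for a pair formed by one of `i`, `j` and a
  -- position strictly between them: such an inversion survives unchanged.
  refine Finset.card_le_card_of_injOn
    (fun p => if (p.1 = i ∧ p.2 < j) ∨ (p.2 = j ∧ i < p.1) then p
      else (swap i j p.1, swap i j p.2)) ?_ ?_
  · rintro ⟨a, b⟩ hab
    obtain ⟨-, h1, h2⟩ := Finset.mem_filter.mp hab
    simp only [Finset.mem_coe, Finset.mem_erase,
      Perm.mul_apply, swap_apply_def]
    grind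
  · rintro ⟨a, b⟩ hab ⟨c, d⟩ hcd h
    obtain ⟨-, h1, -⟩ := Finset.mem_filter.mp hab
    obtain ⟨-, h2, -⟩ := Finset.mem_filter.mp hcd
    simp only [swap_apply_def] at h
    grind (splits := 30)

theorem Step.invCount_lt {n : ℕ} {u v : Perm (Fin n)} (h : Step u v) :
    invCount u < invCount v := by
  obtain ⟨i, j, hij, hu, rfl⟩ := h
  exact BoolInv.invCount_lt u hij hu

theorem step_of_invCount_lt {n : ℕ} {u t : Perm (Fin n)} (ht : IsTransposition t)
    (h : invCount u < invCount (u * t)) : Step u (u * t) := by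
  obtain ⟨i, j, hij, rfl⟩ := ht
  wlog hlt : i < j generalizing i j
  · rw [swap_comm] at h ⊢
    exact this j i hij.symm h (lt_of_le_of_ne (not_lt.mp hlt) hij.symm)
  refine ⟨i, j, hlt, ?_, rfl⟩
  by_contra hu
  have h1 : u j < u i := lt_of_le_of_ne (not_lt.mp hu) (fun e => hij (u.injective e).symm)
  have h2 := BoolInv.invCount_lt (u * swap i j) hlt (by simpa using h1)
  rw [mul_assoc, swap_mul_self, mul_one] at h2
  omega

theorem bruhatLE_iff {n : ℕ} {u w : Perm (Fin n)} : BruhatLE u w ↔ Br u w := by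
  constructor
  · rintro ⟨ts, h1, rfl, h3⟩
    induction ts generalizing u with
    | nil => exact Relation.ReflTransGen.refl
    | cons t ts ih =>
      have h0 := h3 0 (by simp)
      simp only [List.take_zero, List.foldl_nil, zero_add, List.take_succ_cons,
        List.foldl_cons] at h0
      refine Relation.ReflTransGen.head (step_of_invCount_lt (h1 t (by simp)) h0) ?_
      refine ih (fun t' ht' => h1 t' (by simp [ht'])) fun k hk => ?_
      simpa using h3 (k + 1) (by simpa using hk)
  · intro h
    induction h using Relation.ReflTransGen.head_induction_on with
    | refl => exact ⟨[], by simp, by simp, by simp⟩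
    | head hs _ ih =>
      obtain ⟨ts, h1, h2, h3⟩ := ih
      have hlt := hs.invCount_lt
      obtain ⟨i, j, hij, hu, rfl⟩ := hs
      refine ⟨swap i j :: ts, ?_, by simpa using h2, ?_⟩
      · intro t ht
        rcases List.mem_cons.mp ht with rfl | ht
        · exact ⟨i, j, hij.ne, rfl⟩
        · exact h1 t ht
      · rintro (_ | k) hk
        · simpa using hlt
        · simpa using h3 k (by simpa using hk)

theorem Br.refl {n : ℕ} (u : Perm (Fin n)) : Br u u := Relation.ReflTransGen.refl

theorem Br.trans {n : ℕ} {u v w : Perm (Fin n)} (h : Br u v) (h' : Br v w) : Br u w :=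
  Relation.ReflTransGen.trans h h'

theorem Br.inv {n : ℕ} {u v : Perm (Fin n)} (h : Br u v) : Br u⁻¹ v⁻¹ := by
  induction h with
  | refl => exact Br.refl _
  | tail _ hs ih =>
    obtain ⟨i, j, hij, hu, rfl⟩ := hs
    refine ih.tail ⟨_, _, hu, by simpa using hij, ?_⟩
    rw [mul_inv_rev, swap_inv, Equiv.mul_swap_eq_swap_mul]
    simp

/-! ### Multiplication by adjacent transpositions and the lifting property -/

/-- The adjacent transposition exchanging positions `i` and `i + 1`. -/
def sg {m : ℕ} (i : Fin m) : Perm (Fin (m + 1)) := swap i.castSucc i.succ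

/-- The Bruhat-larger of `w` and `w * sg i`. -/
def up {m : ℕ} (i : Fin m) (w : Perm (Fin (m + 1))) : Perm (Fin (m + 1)) :=
  if w i.castSucc < w i.succ then w * sg i else w

/-- The Bruhat-smaller of `w` and `w * sg i`. -/
def down {m : ℕ} (i : Fin m) (w : Perm (Fin (m + 1))) : Perm (Fin (m + 1)) :=
  if w i.castSucc < w i.succ then w else w * sg i

section Lifting

variable {m : ℕ} {i : Fin m} {u v w : Perm (Fin (m + 1))}

theorem sg_mul_sg (i : Fin m) : sg i * sg i = 1 := swap_mul_self _ _

theorem sg_inv (i : Fin m) : (sg i)⁻¹ = sg i := swap_inv _ _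

@[simp] theorem sg_castSucc (i : Fin m) : sg i i.castSucc = i.succ := swap_apply_left _ _

@[simp] theorem sg_succ (i : Fin m) : sg i i.succ = i.castSucc := swap_apply_right _ _

theorem mul_sg_sg (w : Perm (Fin (m + 1))) (i : Fin m) : w * sg i * sg i = w := by
  rw [mul_assoc, sg_mul_sg, mul_one]

/-- `sg i` preserves the order of any pair other than `(i, i + 1)`. -/
theorem sg_lt_sg {a b : Fin (m + 1)} (hab : a < b) (h : ¬(a = i.castSucc ∧ b = i.succ)) :
    sg i a < sg i b := by
  simp only [sg, swap_apply_def]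
  simp only [Fin.lt_def, Fin.ext_iff] at *
  split_ifs <;> simp at * <;> omega

theorem invCount_inv {n : ℕ} (w : Perm (Fin n)) : invCount w⁻¹ = invCount w := by
  unfold invCount
  refine Finset.card_nbij' (fun p => (w⁻¹ p.2, w⁻¹ p.1)) (fun p => (w p.2, w p.1)) ?_ ?_ ?_ ?_
  all_goals
    rintro ⟨a, b⟩ h
    simp_all

theorem lt_or_gt_values (w : Perm (Fin (m + 1))) (i : Fin m) :
    w i.castSucc < w i.succ ∨ w i.succ < w i.castSucc :=
  lt_or_gt_of_ne fun h => (Fin.castSucc_lt_succ (i := i)).ne (w.injective h)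

theorem step_mul_sg (h : w i.castSucc < w i.succ) : Step w (w * sg i) :=
  ⟨_, _, Fin.castSucc_lt_succ, h, rfl⟩

theorem br_mul_sg (h : w i.castSucc < w i.succ) : Br w (w * sg i) :=
  Relation.ReflTransGen.single (step_mul_sg h)

theorem mul_sg_br (h : w i.succ < w i.castSucc) : Br (w * sg i) w := by
  have := br_mul_sg (w := w * sg i) (i := i) (by simpa using h)
  rwa [mul_sg_sg] at this

theorem br_up (i : Fin m) (w : Perm (Fin (m + 1))) : Br w (up i w) := by
  unfold up
  split_ifs with h
  · exact br_mul_sg h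
  · exact Br.refl _

theorem mul_sg_br_up (i : Fin m) (w : Perm (Fin (m + 1))) : Br (w * sg i) (up i w) := by
  unfold up
  split_ifs with h
  · exact Br.refl _
  · exact mul_sg_br ((lt_or_gt_values w i).resolve_left h)

theorem down_br (i : Fin m) (w : Perm (Fin (m + 1))) : Br (down i w) w := by
  unfold down
  split_ifs with h
  · exact Br.refl _
  · exact mul_sg_br ((lt_or_gt_values w i).resolve_left h)

theorem down_br_mul_sg (i : Fin m) (w : Perm (Fin (m + 1))) : Br (down i w) (w * sg i) := by
  unfold down
  split_ifs with h
  · exact br_mul_sg h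
  · exact Br.refl _

/-- A Bruhat step either is multiplication by `sg i`, or survives multiplication by `sg i`. -/
theorem Step.mul_sg (h : Step u v) (i : Fin m) : v = u * sg i ∨ Step (u * sg i) (v * sg i) := by
  obtain ⟨a, b, hab, hu, rfl⟩ := h
  by_cases hi : a = i.castSucc ∧ b = i.succ
  · left
    rw [hi.1, hi.2, sg]
  · right
    refine ⟨sg i a, sg i b, sg_lt_sg hab hi, ?_, ?_⟩
    · simpa [← Perm.mul_apply, mul_assoc, sg_mul_sg] using hu
    · rw [mul_assoc, mul_assoc, Equiv.swap_mul_eq_mul_swap, sg_inv]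

theorem Br.up (h : Br u v) (i : Fin m) : Br (up i u) (up i v) := by
  induction h with
  | refl => exact Br.refl _
  | @tail b c _ hs ih =>
    refine ih.trans ?_
    by_cases hb : b i.castSucc < b i.succ
    · rw [BoolInv.up, if_pos hb]
      rcases hs.mul_sg i with rfl | hs'
      · exact br_up _ _
      · exact (Relation.ReflTransGen.single hs').trans (mul_sg_br_up _ _)
    · rw [BoolInv.up, if_neg hb]
      exact (Relation.ReflTransGen.single hs).trans (br_up _ _)

theorem Br.down (h : Br u v) (i : Fin m) : Br (down i u) (down i v) := by
  induction h with
  | refl => exact Br.refl _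
  | @tail b c _ hs ih =>
    refine ih.trans ?_
    by_cases hc : c i.castSucc < c i.succ
    · rw [BoolInv.down.eq_1 i c, if_pos hc]
      exact (down_br _ _).trans (Relation.ReflTransGen.single hs)
    · rw [BoolInv.down.eq_1 i c, if_neg hc]
      rcases hs.mul_sg i with rfl | hs'
      · rw [mul_sg_sg]
        exact down_br _ _
      · exact (down_br_mul_sg _ _).trans (Relation.ReflTransGen.single hs')

theorem down_up_br (i : Fin m) (w : Perm (Fin (m + 1))) : Br (down i (up i w)) w := by
  unfold up
  split_ifs with h
  · simpa only [mul_sg_sg] using down_br_mul_sg i (w * sg i)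
  · exact down_br _ _

end Lifting

/-! ### Demazure conjugation of involutions -/

/-- Conjugation of `w` by the transposition `(a b)`, replaced by multiplication by `(a b)` when
`w` fixes both `a` and `b`. -/
def act {α : Type*} [DecidableEq α] (a b : α) (w : Perm α) : Perm α :=
  if w a = a ∧ w b = b then w * swap a b else swap a b * w * swap a b

/-- Demazure conjugation: the two-sided Demazure product of `w` with `sg i`. -/
def dem {m : ℕ} (i : Fin m) (w : Perm (Fin (m + 1))) : Perm (Fin (m + 1)) :=
  (up i (up i w)⁻¹)⁻¹

/-- The lower analogue of `dem`. -/
def low {m : ℕ} (i : Fin m) (w : Perm (Fin (m + 1))) : Perm (Fin (m + 1)) :=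
  down i (down i w⁻¹)⁻¹

section Demazure

variable {m : ℕ} {i : Fin m} {u v w : Perm (Fin (m + 1))}

theorem IsInvolution.inv_eq {n : ℕ} {w : Perm (Fin n)} (h : IsInvolution w) : w⁻¹ = w :=
  inv_eq_of_mul_eq_one_left h

theorem isInvolution_iff {n : ℕ} {w : Perm (Fin n)} : IsInvolution w ↔ ∀ a, w (w a) = a := by
  simp [IsInvolution, Equiv.ext_iff]

theorem Br.dem (h : Br u v) (i : Fin m) : Br (dem i u) (dem i v) :=
  ((h.up i).inv.up i).inv

theorem br_dem (i : Fin m) (w : Perm (Fin (m + 1))) : Br w (dem i w) := by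
  refine (br_up i w).trans ?_
  simpa [dem] using (br_up i (up i w)⁻¹).inv

/-- The lifting property: `dem i` and `low i` behave like a Galois connection. -/
theorem low_br_of_br_dem (h : Br u (dem i v)) : Br (low i u) v := by
  have h1 : Br u⁻¹ (up i (up i v)⁻¹) := by simpa [BoolInv.dem] using h.inv
  have h2 : Br (down i u⁻¹)⁻¹ (up i v) := by
    simpa using ((h1.down i).trans (down_up_br _ _)).inv
  exact (h2.down i).trans (down_up_br _ _)

theorem dem_of_lt (hw : IsInvolution w) (h : w i.castSucc < w i.succ) :
    dem i w = act i.castSucc i.succ w := by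
  have hR : (w * sg i)⁻¹ = sg i * w := by rw [mul_inv_rev, sg_inv, IsInvolution.inv_eq hw]
  rw [dem, up.eq_1 i w, if_pos h, hR, up, act]
  by_cases hf : w i.castSucc = i.castSucc ∧ w i.succ = i.succ
  · rw [if_pos hf, if_neg (by simp [hf.1, hf.2, Fin.le_def]), ← hR, inv_inv, sg]
  · rw [if_neg hf, if_pos (by simpa using sg_lt_sg h hf), mul_inv_rev, mul_inv_rev, sg_inv,
      IsInvolution.inv_eq hw, ← mul_assoc]
    rfl

theorem dem_of_gt (hw : IsInvolution w) (h : w i.succ < w i.castSucc) : dem i w = w := by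
  rw [dem, up.eq_1 i w, if_neg h.not_gt, IsInvolution.inv_eq hw, up, if_neg h.not_gt,
    IsInvolution.inv_eq hw]

theorem act_involutive {α : Type*} [DecidableEq α] {w : Perm α} (hw : ∀ x, w (w x) = x)
    (a b x : α) : act a b w (act a b w x) = x := by
  unfold act
  split_ifs with h
  · simp only [Perm.mul_apply, swap_apply_def]
    grind
  · simp [hw]

theorem isInvolution_dem (hw : IsInvolution w) (i : Fin m) : IsInvolution (dem i w) := by
  rcases lt_or_gt_values w i with h | h
  · rw [dem_of_lt hw h]
    exact isInvolution_iff.mpr (act_involutive (isInvolution_iff.mp hw) _ _)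
  · rwa [dem_of_gt hw h]

theorem low_of_lt (hw : IsInvolution w) (h : w i.castSucc < w i.succ) : low i w = w := by
  rw [low, IsInvolution.inv_eq hw, down.eq_1 i w, if_pos h, IsInvolution.inv_eq hw, down,
    if_pos h]

/-- At a descent `i`, an involution `w` is recovered from `low i w`. -/
theorem low_of_gt (hw : IsInvolution w) (h : w i.succ < w i.castSucc) :
    IsInvolution (low i w) ∧ dem i (low i w) = w ∧ invCount (low i w) < invCount w := by
  have hR : (w * sg i)⁻¹ = sg i * w := by rw [mul_inv_rev, sg_inv, IsInvolution.inv_eq hw]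
  have hlt1 : invCount (w * sg i) < invCount w := by
    have := (step_mul_sg (w := w * sg i) (i := i) (by simpa using h)).invCount_lt
    rwa [mul_sg_sg] at this
  have hw' := isInvolution_iff.mp hw
  have hcs : i.castSucc < i.succ := Fin.castSucc_lt_succ
  rw [low, IsInvolution.inv_eq hw, down.eq_1 i w, if_neg h.not_gt, hR, down]
  by_cases hf : w i.succ = i.castSucc ∧ w i.castSucc = i.succ
  · rw [if_pos (by simp [hf.1, hf.2]), ← hR]
    have h1 : IsInvolution (w * sg i) := by
      rw [isInvolution_iff]
      intro x
      simp only [Perm.mul_apply, sg, swap_apply_def]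
      grind
    rw [IsInvolution.inv_eq h1]
    refine ⟨h1, ?_, hlt1⟩
    rw [dem_of_lt h1 (by simp [hf.1, hf.2]), act, if_pos (by simp [hf.1, hf.2])]
    exact mul_sg_sg _ _
  · have hlt := sg_lt_sg h hf
    rw [if_neg (by simpa using hlt.le)]
    have h1 : IsInvolution (sg i * w * sg i) := by
      rw [isInvolution_iff]
      intro x
      simp [sg, hw']
    refine ⟨h1, ?_, ?_⟩
    · rw [dem_of_lt h1 (by simpa using hlt), act, if_neg]
      · change sg i * (sg i * w * sg i) * sg i = w
        rw [← mul_assoc, ← mul_assoc, sg_mul_sg, one_mul, mul_sg_sg]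
      · rintro ⟨h2, h3⟩
        simp only [Perm.mul_apply, sg_castSucc, sg_succ] at h2 h3
        have h2' : w i.succ = i.succ := by
          rwa [sg, swap_apply_eq_iff, swap_apply_left] at h2
        have h3' : w i.castSucc = i.castSucc := by
          rwa [sg, swap_apply_eq_iff, swap_apply_right] at h3
        rw [h2', h3'] at h
        exact absurd h hcs.not_gt
    · have h4 := step_mul_sg (w := sg i * w * sg i) (i := i) (by simpa using hlt)
      rw [mul_sg_sg] at h4
      refine h4.invCount_lt.trans ?_
      rwa [← hR, invCount_inv]

end Demazure

/-! ### Words and supports -/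

/-- The involution obtained from the identity by the Demazure conjugations along a word; the
last letter of the word acts first. -/
def word {m : ℕ} (l : List (Fin m)) : Perm (Fin (m + 1)) := l.foldr dem 1

/-- The support of `w`: the cuts `k` across which `w` moves some position to the right, that is,
the adjacent transpositions lying below `w`. -/
def supp {m : ℕ} (w : Perm (Fin (m + 1))) : Finset (Fin m) :=
  Finset.univ.filter fun k => ∃ a, a ≤ k.castSucc ∧ k.castSucc < w a

section Words

variable {m : ℕ} {i k : Fin m} {u v w : Perm (Fin (m + 1))} {l l' : List (Fin m)}

@[simp] theorem word_nil : word ([] : List (Fin m)) = 1 := rfl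

@[simp] theorem word_cons (i : Fin m) (l : List (Fin m)) : word (i :: l) = dem i (word l) := rfl

theorem isInvolution_word (l : List (Fin m)) : IsInvolution (word l) := by
  induction l with
  | nil => exact mul_one 1
  | cons i l ih => exact isInvolution_dem ih i

theorem word_br_of_sublist (h : l'.Sublist l) : Br (word l') (word l) := by
  induction h with
  | slnil => exact Br.refl _
  | cons i _ ih => exact ih.trans (br_dem i _)
  | cons_cons i _ ih => exact ih.dem i

theorem one_br_word (l : List (Fin m)) : Br 1 (word l) :=
  word_br_of_sublist (List.nil_sublist l)

theorem invCount_one {n : ℕ} : invCount (1 : Perm (Fin n)) = 0 := by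
  unfold invCount
  rw [Finset.card_eq_zero, Finset.filter_eq_empty_iff]
  rintro x - ⟨h1, h2⟩
  exact absurd h1 h2.not_gt

theorem eq_one_of_br_one (h : Br u 1) : u = 1 := by
  rcases Relation.ReflTransGen.cases_tail h with h | ⟨c, _, hs⟩
  · exact h.symm
  · have := hs.invCount_lt
    rw [invCount_one] at this
    omega

/-- The subword property. -/
theorem exists_sublist_of_br_word (hu : IsInvolution u) (h : Br u (word l)) :
    ∃ l', l'.Sublist l ∧ u = word l' := by
  induction l generalizing u with
  | nil => exact ⟨[], List.Sublist.refl _, eq_one_of_br_one h⟩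
  | cons i l ih =>
    have hlow : Br (low i u) (word l) := low_br_of_br_dem h
    rcases lt_or_gt_values u i with hi | hi
    · rw [low_of_lt hu hi] at hlow
      obtain ⟨l', h1, h2⟩ := ih hu hlow
      exact ⟨l', h1.cons i, h2⟩
    · obtain ⟨h1, h2, -⟩ := low_of_gt hu hi
      obtain ⟨l', h3, h4⟩ := ih h1 hlow
      exact ⟨i :: l', h3.cons_cons i, by rw [word_cons, ← h4, h2]⟩

theorem exists_descent (h : w ≠ 1) : ∃ i : Fin m, w i.succ < w i.castSucc := by
  by_contra! hc
  refine h (Equiv.ext fun x => ?_)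
  have hm : StrictMono w := Fin.strictMono_iff_lt_succ.mpr fun i =>
    (lt_or_gt_values w i).resolve_right (hc i).not_gt
  have := Subsingleton.elim (hm.orderIsoOfSurjective w w.surjective) (OrderIso.refl _)
  simpa using congrArg (fun e => e x) this

theorem exists_word (hw : IsInvolution w) : ∃ l, w = word l := by
  induction hn : invCount w using Nat.strong_induction_on generalizing w with
  | _ n ih =>
    by_cases h1 : w = 1
    · exact ⟨[], h1⟩
    · obtain ⟨i, hi⟩ := exists_descent h1
      obtain ⟨h2, h3, h4⟩ := low_of_gt hw hi
      obtain ⟨l, hl⟩ := ih _ (hn ▸ h4) h2 rfl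
      exact ⟨i :: l, by rw [word_cons, ← hl, h3]⟩

theorem mem_supp : k ∈ supp w ↔ ∃ a, a ≤ k.castSucc ∧ k.castSucc < w a := by
  simp [supp]

theorem notMem_supp : k ∉ supp w ↔ ∀ a, a ≤ k.castSucc → w a ≤ k.castSucc := by
  simp [supp]

theorem supp_mono (h : Br u v) : supp u ⊆ supp v := by
  induction h with
  | refl => exact subset_rfl
  | @tail b c _ hs ih =>
    refine ih.trans fun k hk => ?_
    obtain ⟨i, j, hij, hb, rfl⟩ := hs
    obtain ⟨a, ha, hka⟩ := mem_supp.mp hk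
    rw [mem_supp]
    by_cases hai : a = i
    · subst hai
      by_cases hj : j ≤ k.castSucc
      · exact ⟨j, hj, by simpa using hka⟩
      · exact ⟨a, ha, by simpa using hka.trans hb⟩
    · by_cases haj : a = j
      · subst haj
        exact ⟨i, hij.le.trans ha, by simpa using hka⟩
      · exact ⟨a, ha, by rwa [Perm.mul_apply, swap_apply_of_ne_of_ne hai haj]⟩

theorem sg_le_cut (h : k ≠ i) {a : Fin (m + 1)} (ha : a ≤ k.castSucc) :
    sg i a ≤ k.castSucc := by
  simp only [sg, swap_apply_def]
  simp only [Fin.le_def, Fin.ext_iff, ne_eq] at *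
  split_ifs <;> simp at * <;> omega

theorem supp_dem (hw : IsInvolution w) : supp (dem i w) ⊆ insert i (supp w) := by
  intro k hk
  by_contra hc
  rw [Finset.mem_insert, not_or, notMem_supp] at hc
  obtain ⟨hki, hc⟩ := hc
  revert hk
  rw [imp_false, notMem_supp]
  intro a ha
  rcases lt_or_gt_values w i with h | h
  · rw [dem_of_lt hw h, act]
    split_ifs
    · exact hc _ (sg_le_cut hki ha)
    · exact sg_le_cut hki (hc _ (sg_le_cut hki ha))
  · rw [dem_of_gt hw h]
    exact hc a ha

theorem word_singleton_br (h : i ∈ l) : Br (word [i]) (word l) :=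
  word_br_of_sublist (List.singleton_sublist.mpr h)

theorem mem_supp_word_singleton (i : Fin m) : i ∈ supp (word [i]) := by
  rw [mem_supp]
  refine ⟨i.castSucc, le_rfl, ?_⟩
  rw [word_cons, word_nil, dem_of_lt (mul_one 1) (by simp), act, if_pos (by simp)]
  simp

theorem mem_supp_word : i ∈ supp (word l) ↔ i ∈ l := by
  constructor
  · induction l with
    | nil => exact fun h => absurd h (notMem_supp.mpr fun a ha => ha)
    | cons j l ih =>
      intro h
      have := supp_dem (isInvolution_word l) h
      rw [Finset.mem_insert] at this
      rcases this with rfl | h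
      · simp
      · simp [ih h]
  · exact fun h => supp_mono (word_singleton_br h) (mem_supp_word_singleton i)

end Words

/-! ### Boolean involutions are the words without repeated letters -/

section Boolean

variable {m : ℕ} {w : Perm (Fin (m + 1))} {l : List (Fin m)}

/-- A word without repeated letters is Boolean: by the subword property, sending `u` to its support
identifies the ideal below it with the subsets of the set of letters. -/
theorem isBoolean_word (hl : l.Nodup) : IsBooleanInvolution (word l) := by
  classical
  -- In a word without repetitions, a subword is determined by its set of letters.
  have key : ∀ u : {u : Perm (Fin (m + 1)) // IsInvolution u ∧ BruhatLE u (word l)},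
      u.1 = word (l.filter fun i => i ∈ supp u.1) := by
    rintro ⟨u, hu, hle⟩
    obtain ⟨l', hsub, rfl⟩ := exists_sublist_of_br_word hu (bruhatLE_iff.mp hle)
    simp only [mem_supp_word]
    congr 1
    have h1 : (l'.filter fun i => i ∈ l').Sublist (l.filter fun i => i ∈ l') := hsub.filter _
    rw [List.filter_eq_self.mpr (by simp)] at h1
    refine h1.eq_of_length (List.Perm.length_eq ?_)
    refine (List.perm_ext_iff_of_nodup (hl.sublist hsub) (hl.filter _)).mpr fun a => ?_
    simpa using fun ha => hsub.subset ha
  have hword : ∀ S : Finset (Fin m), BruhatLE (word (l.filter fun i => i ∈ S)) (word l) :=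
    fun S => bruhatLE_iff.mpr (word_br_of_sublist List.filter_sublist)
  have hmono : ∀ a b : {u : Perm (Fin (m + 1)) // IsInvolution u ∧ BruhatLE u (word l)},
      BruhatLE a.1 b.1 ↔ supp a.1 ⊆ supp b.1 := by
    intro a b
    rw [bruhatLE_iff]
    refine ⟨supp_mono, fun h => ?_⟩
    rw [key a, key b]
    refine word_br_of_sublist (List.monotone_filter_right _ fun i hi => ?_)
    simp only [decide_eq_true_eq] at *
    exact h hi
  have hsupp : ∀ a : {u : Perm (Fin (m + 1)) // IsInvolution u ∧ BruhatLE u (word l)},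
      supp a.1 ⊆ l.toFinset := fun a k hk =>
    List.mem_toFinset.mpr (mem_supp_word.mp (supp_mono (bruhatLE_iff.mp a.2.2) hk))
  let e : Fin l.toFinset.card ≃ l.toFinset := l.toFinset.equivFin.symm
  let F : {u : Perm (Fin (m + 1)) // IsInvolution u ∧ BruhatLE u (word l)} →
      Finset (Fin l.toFinset.card) :=
    fun u => Finset.univ.filter fun a => (e a : Fin m) ∈ supp u.1
  have hF : ∀ a b, F a ⊆ F b ↔ supp a.1 ⊆ supp b.1 := by
    intro a b
    constructor
    · intro h k hk
      have := @h (e.symm ⟨k, hsupp a hk⟩) (by simpa [F] using hk)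
      simpa [F] using this
    · intro h k hk
      simp only [F, Finset.mem_filter, Finset.mem_univ, true_and] at *
      exact h hk
  refine ⟨l.toFinset.card, Equiv.ofBijective F ⟨fun a b hab => ?_, fun S => ?_⟩, fun a b => ?_⟩
  · have h : supp a.1 = supp b.1 :=
      ((hF a b).mp hab.le).antisymm ((hF b a).mp hab.ge)
    apply Subtype.ext
    rw [key a, key b, h]
  · refine ⟨⟨_, isInvolution_word _, hword (S.image fun a => (e a : Fin m))⟩, ?_⟩
    ext a
    simp only [F, Finset.mem_filter, Finset.mem_univ, true_and, mem_supp_word, List.mem_filter,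
      decide_eq_true_eq, Finset.mem_image]
    constructor
    · rintro ⟨-, b, hb, hba⟩
      rwa [← e.injective (Subtype.ext hba)]
    · exact fun ha => ⟨List.mem_toFinset.mp (e a).2, a, ha, rfl⟩
  · exact (hmono a b).trans (hF a b).symm

/-- Conversely, in a Boolean ideal every atom is an adjacent transposition, so that `w` is
determined by its support, and a shortest word for `w` cannot repeat a letter. -/
theorem exists_nodup_of_isBoolean (hw : IsInvolution w) (h : IsBooleanInvolution w) :
    ∃ l : List (Fin m), l.Nodup ∧ w = word l := by
  classical
  obtain ⟨r, f, hf⟩ := h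
  have hex : ∃ n, ∃ l : List (Fin m), l.length = n ∧ w = word l := by
    obtain ⟨l, hl⟩ := exists_word hw
    exact ⟨_, l, rfl, hl⟩
  obtain ⟨l, hlen, hl⟩ := Nat.find_spec hex
  refine ⟨l, ?_, hl⟩
  by_contra hnd
  -- Deleting a repeated letter from a shortest word keeps the support and gives `u < w`.
  obtain ⟨i, hi⟩ : ∃ i, (i : Fin m) ∈ l.erase i := by
    by_contra! hc
    exact hnd (List.nodup_iff_count_le_one.mpr fun a => by
      have := List.count_eq_zero.mpr (hc a)
      rw [List.count_erase_self] at this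
      omega)
  have hil : i ∈ l := List.mem_of_mem_erase hi
  have hmem : ∀ j, j ∈ l → j ∈ l.erase i := fun j hj => by
    by_cases hji : j = i
    · rwa [hji]
    · exact (List.mem_erase_of_ne hji).mpr hj
  have huw : Br (word (l.erase i)) w := hl ▸ word_br_of_sublist List.erase_sublist
  have hne : word (l.erase i) ≠ w := fun e => by
    have := Nat.find_min' hex ⟨_, rfl, e.symm⟩
    rw [← hlen, List.length_erase_of_mem hil] at this
    have := List.length_pos_of_mem hil
    omega
  let U : {u : Perm (Fin (m + 1)) // IsInvolution u ∧ BruhatLE u w} :=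
    ⟨_, isInvolution_word (l.erase i), bruhatLE_iff.mpr huw⟩
  let T : {u : Perm (Fin (m + 1)) // IsInvolution u ∧ BruhatLE u w} :=
    ⟨w, hw, bruhatLE_iff.mpr (Br.refl _)⟩
  have hss : f U ⊂ f T := by
    refine ((hf U T).mp U.2.2).ssubset_of_ne fun e => hne ?_
    exact congrArg Subtype.val (f.injective e)
  obtain ⟨a, haT, haU⟩ := Finset.exists_of_ssubset hss
  -- The element of the ideal corresponding to `{a}` is an adjacent transposition below `w`.
  obtain ⟨x, hx⟩ := f.surjective {a}
  obtain ⟨lx, hlx⟩ := exists_word x.2.1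
  have hxU : ¬ Br x.1 U.1 := fun h => haU (by
    have := (hf x U).mp (bruhatLE_iff.mpr h)
    rwa [hx, Finset.singleton_subset_iff] at this)
  cases lx with
  | nil => exact hxU (by rw [hlx]; exact one_br_word _)
  | cons j lx =>
    have hjx : Br (word [j]) x.1 := hlx ▸ word_singleton_br (by simp)
    have hjw : Br (word [j]) w := hjx.trans (bruhatLE_iff.mp x.2.2)
    have hjU : Br (word [j]) (word (l.erase i)) := by
      refine word_singleton_br (hmem j (mem_supp_word.mp ?_))
      exact hl ▸ supp_mono hjw (mem_supp_word_singleton j)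
    let J : {u : Perm (Fin (m + 1)) // IsInvolution u ∧ BruhatLE u w} :=
      ⟨_, isInvolution_word [j], bruhatLE_iff.mpr hjw⟩
    have h1 : f J ⊆ {a} := hx ▸ (hf J x).mp (bruhatLE_iff.mpr hjx)
    rcases Finset.subset_singleton_iff.mp h1 with h2 | h2
    · let O : {u : Perm (Fin (m + 1)) // IsInvolution u ∧ BruhatLE u w} :=
        ⟨1, mul_one 1, bruhatLE_iff.mpr (hl ▸ one_br_word l)⟩
      have h3 : Br (word [j]) 1 := bruhatLE_iff.mp ((hf J O).mpr (by simp [h2]))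
      exact notMem_supp.mpr (fun a ha => ha) (supp_mono h3 (mem_supp_word_singleton j))
    · exact haU (by
        have := (hf J U).mp (bruhatLE_iff.mpr hjU)
        rwa [h2, Finset.singleton_subset_iff] at this)

end Boolean

/-! ### The rank of a word without repeated letters -/

section Rank

variable {m : ℕ} {i : Fin m} {w : Perm (Fin (m + 1))} {l : List (Fin m)}

theorem invCount_mul_sg (h : w i.castSucc < w i.succ) :
    invCount (w * sg i) = invCount w + 1 := by
  have hcs : i.castSucc < i.succ := Fin.castSucc_lt_succ
  unfold invCount
  have hmem : (i.castSucc, i.succ) ∈ Finset.univ.filter fun p : Fin (m + 1) × Fin (m + 1) =>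
      p.1 < p.2 ∧ (w * sg i) p.2 < (w * sg i) p.1 :=
    Finset.mem_filter.mpr ⟨Finset.mem_univ _, hcs, by simpa using h⟩
  rw [← Finset.card_erase_add_one hmem]
  congr 1
  have hss : ∀ a, sg i (sg i a) = a := fun a => by simp [sg]
  refine Finset.card_nbij' (fun p => (sg i p.1, sg i p.2)) (fun p => (sg i p.1, sg i p.2))
    ?_ ?_ ?_ ?_
  · rintro ⟨a, b⟩ hab
    obtain ⟨h1, h2⟩ := Finset.mem_erase.mp hab
    obtain ⟨-, h3, h4⟩ := Finset.mem_filter.mp h2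
    refine Finset.mem_filter.mpr ⟨Finset.mem_univ _, sg_lt_sg h3 fun h => h1 ?_, h4⟩
    exact Prod.ext h.1 h.2
  · rintro ⟨a, b⟩ hab
    obtain ⟨-, h3, h4⟩ := Finset.mem_filter.mp hab
    have hne : ¬(a = i.castSucc ∧ b = i.succ) := by
      rintro ⟨rfl, rfl⟩
      exact h.not_gt h4
    have h5 := sg_lt_sg h3 hne
    refine Finset.mem_erase.mpr ⟨fun e => ?_, Finset.mem_filter.mpr
      ⟨Finset.mem_univ _, h5, by simpa [hss] using h4⟩⟩
    have e1 := congrArg (fun p => sg i p.1) e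
    have e2 := congrArg (fun p => sg i p.2) e
    simp only [hss, sg_castSucc, sg_succ] at e1 e2
    rw [e1, e2] at h3
    exact h3.not_gt hcs
  · rintro ⟨a, b⟩ -
    simp [hss]
  · rintro ⟨a, b⟩ -
    simp [hss]

/-- An involution whose support misses `i` preserves both sides of the cut at `i`. -/
theorem le_of_notMem_supp (hw : IsInvolution w) (hi : i ∉ supp w) :
    w i.castSucc ≤ i.castSucc ∧ i.succ ≤ w i.succ := by
  rw [notMem_supp] at hi
  refine ⟨hi _ le_rfl, ?_⟩
  by_contra hc
  have h1 : w i.succ ≤ i.castSucc := by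
    simp only [Fin.le_def, Fin.val_succ, Fin.val_castSucc] at *
    omega
  have h2 := hi _ h1
  rw [isInvolution_iff.mp hw] at h2
  exact h2.not_gt Fin.castSucc_lt_succ

/-- A new letter raises `inv + exc` by two: multiplication adds one inversion and one excedance,
while conjugation adds two inversions and keeps the number of excedances. -/
theorem rank_dem (hw : IsInvolution w) (hi : i ∉ supp w) :
    invCount (dem i w) + excCount (dem i w) = invCount w + excCount w + 2 := by
  have hcs : i.castSucc < i.succ := Fin.castSucc_lt_succ
  obtain ⟨h1, h2⟩ := le_of_notMem_supp hw hi
  have hlt : w i.castSucc < w i.succ := h1.trans_lt (hcs.trans_le h2)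
  rw [dem_of_lt hw hlt, act]
  change invCount (if _ then w * sg i else sg i * w * sg i) +
    excCount (if _ then w * sg i else sg i * w * sg i) = _
  split_ifs with hf
  · have h3 : excCount (w * sg i) = excCount w + 1 := by
      unfold excCount
      rw [← Finset.card_insert_of_notMem (a := i.castSucc) (by simp [hf.1])]
      congr 1
      ext a
      rw [Finset.mem_insert, Finset.mem_filter, Finset.mem_filter, Perm.mul_apply, sg,
        swap_apply_def]
      grind
    rw [invCount_mul_sg hlt, h3]
    ring
  · have hR : (w * sg i)⁻¹ = sg i * w := by rw [mul_inv_rev, sg_inv, IsInvolution.inv_eq hw]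
    have hss : ∀ a, sg i (sg i a) = a := fun a => by simp [sg]
    have h3 : invCount (sg i * w * sg i) = invCount w + 2 := by
      rw [invCount_mul_sg (by simpa using sg_lt_sg hlt hf), ← hR, invCount_inv,
        invCount_mul_sg hlt]
    have h5 : ∀ a, a < w a → ¬(a = i.castSucc ∧ w a = i.succ) := by
      rintro a h6 ⟨rfl, h7⟩
      exact h1.not_gt h6
    have h4 : excCount (sg i * w * sg i) = excCount w := by
      unfold excCount
      refine Finset.card_nbij' (sg i) (sg i) ?_ ?_ ?_ ?_
      · intro a ha
        have h6 := (Finset.mem_filter.mp ha).2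
        refine Finset.mem_filter.mpr ⟨Finset.mem_univ _, ?_⟩
        have h7 := sg_lt_sg h6 (i := i) (fun h => by
          simp only [Perm.mul_apply, h.1, sg_castSucc] at h
          have h8 := h.2
          rw [sg, swap_apply_eq_iff, swap_apply_right] at h8
          rw [h8] at h2
          exact h2.not_gt hcs)
        simpa [hss] using h7
      · intro a ha
        have h6 := (Finset.mem_filter.mp ha).2
        refine Finset.mem_filter.mpr ⟨Finset.mem_univ _, ?_⟩
        simpa [hss] using sg_lt_sg h6 (h5 a h6)
      · exact fun a _ => hss a
      · exact fun a _ => hss a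
    rw [h3, h4]
    ring

theorem rank_word (hl : l.Nodup) :
    (invCount (word l) + excCount (word l)) / 2 = l.length := by
  suffices h : invCount (word l) + excCount (word l) = 2 * l.length by omega
  induction l with
  | nil => simp [invCount_one, excCount]
  | cons i l ih =>
    rw [List.nodup_cons] at hl
    rw [word_cons, rank_dem (isInvolution_word l) (fun h => hl.1 (mem_supp_word.mp h)), ih hl.2,
      List.length_cons]
    ring

theorem boolean_rank_iff {k : ℕ} :
    (IsInvolution w ∧ IsBooleanInvolution w ∧ (invCount w + excCount w) / 2 = k) ↔
      ∃ l : List (Fin m), l.Nodup ∧ l.length = k ∧ w = word l := by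
  constructor
  · rintro ⟨h1, h2, h3⟩
    obtain ⟨l, hl, rfl⟩ := exists_nodup_of_isBoolean h1 h2
    exact ⟨l, hl, by rw [← h3, rank_word hl], rfl⟩
  · rintro ⟨l, hl, rfl, rfl⟩
    exact ⟨isInvolution_word l, isBoolean_word hl, rank_word hl⟩

end Rank

/-! ### Transfer to finitary permutations of `ℕ` -/

/-- A permutation of `Fin n`, viewed as a permutation of `ℕ` fixing every `x ≥ n`. -/
def emb {n : ℕ} (w : Perm (Fin n)) : Perm ℕ := w.extendDomain Fin.equivSubtype

/-- `act` for the adjacent transposition of `ℕ` exchanging `i` and `i + 1`. -/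
def actN (i : ℕ) (w : Perm ℕ) : Perm ℕ := act i (i + 1) w

/-- The permutation of `ℕ` obtained from the identity by `actN` along a word. -/
def wordN (l : List ℕ) : Perm ℕ := l.foldr actN 1

/-- The Boolean involutions in `S_n` of rank `k`, as permutations of `ℕ`. -/
def boolSet (n k : ℕ) : Set (Perm ℕ) :=
  {w | ∃ l : List ℕ, l.Nodup ∧ (∀ i ∈ l, i + 1 < n) ∧ l.length = k ∧ w = wordN l}

/-- The members of `boolSet n k` whose support contains the last letter `n - 2`; there are none
for `n ≤ 1`. -/
def lastSet (n k : ℕ) : Set (Perm ℕ) :=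
  {w | ∃ l : List ℕ, l.Nodup ∧ (∀ i ∈ l, i + 1 < n) ∧ l.length = k ∧ (∃ i ∈ l, i + 2 = n) ∧
    w = wordN l}

section Transfer

variable {n : ℕ}

theorem emb_apply (w : Perm (Fin n)) (a : Fin n) : emb w (a : ℕ) = w a :=
  Perm.extendDomain_apply_image w Fin.equivSubtype a

theorem emb_of_le (w : Perm (Fin n)) {x : ℕ} (hx : n ≤ x) : emb w x = x :=
  Perm.extendDomain_apply_not_subtype w Fin.equivSubtype (by simpa using hx)

theorem emb_mul (u v : Perm (Fin n)) : emb (u * v) = emb u * emb v :=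
  (Perm.extendDomain_mul Fin.equivSubtype u v).symm

theorem emb_injective : Function.Injective (emb (n := n)) :=
  Perm.extendDomainHom_injective Fin.equivSubtype

theorem emb_swap (a b : Fin n) : emb (swap a b) = swap (a : ℕ) b := by
  ext x
  by_cases hx : x < n
  · have := emb_apply (swap a b) ⟨x, hx⟩
    simp only at this
    rw [this]
    simp only [swap_apply_def, Fin.ext_iff]
    split_ifs <;> rfl
  · rw [emb_of_le _ (not_lt.mp hx), swap_apply_of_ne_of_ne] <;> omega

theorem emb_act (a b : Fin n) (w : Perm (Fin n)) :
    emb (act a b w) = act (a : ℕ) b (emb w) := by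
  unfold act
  simp only [emb_apply, ← Fin.ext_iff]
  split_ifs <;> simp only [emb_mul, emb_swap]

theorem emb_word {m : ℕ} {l : List (Fin m)} (hl : l.Nodup) :
    emb (word l) = wordN (l.map Fin.val) := by
  induction l with
  | nil => exact Perm.extendDomain_one _
  | cons i l ih =>
    rw [List.nodup_cons] at hl
    obtain ⟨h1, h2⟩ := le_of_notMem_supp (isInvolution_word l) (i := i)
      (fun h => hl.1 (mem_supp_word.mp h))
    have hlt : word l i.castSucc < word l i.succ :=
      h1.trans_lt (Fin.castSucc_lt_succ.trans_le h2)
    rw [word_cons, dem_of_lt (isInvolution_word l) hlt, emb_act, ih hl.2]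
    rfl

theorem emb_image (m k : ℕ) : emb '' {w : Perm (Fin (m + 1)) |
    IsInvolution w ∧ IsBooleanInvolution w ∧ (invCount w + excCount w) / 2 = k} =
      boolSet (m + 1) k := by
  ext x
  simp only [boolean_rank_iff, Set.mem_image]
  constructor
  · rintro ⟨_, ⟨l, h1, h2, rfl⟩, rfl⟩
    refine ⟨l.map Fin.val, h1.map Fin.val_injective, ?_, by simpa using h2, emb_word h1⟩
    simp
  · rintro ⟨l, h1, h2, h3, rfl⟩
    have h4 : ∀ i ∈ l, i < m := fun i hi => by have := h2 i hi; omega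
    obtain ⟨l, rfl⟩ : ∃ l' : List (Fin m), l = l'.map Fin.val :=
      ⟨l.attach.map fun i => ⟨i.1, h4 i.1 i.2⟩, by simp⟩
    have h5 := h1.of_map
    exact ⟨word l, ⟨l, h5, by simpa using h3, rfl⟩, emb_word h5⟩

theorem finite_boolSet (n k : ℕ) : (boolSet n k).Finite := by
  have h : (boolSet (n + 1) k).Finite := emb_image n k ▸ Set.toFinite _
  refine h.subset ?_
  rintro _ ⟨l, h1, h2, h3, rfl⟩
  exact ⟨l, h1, fun i hi => (h2 i hi).trans (Nat.lt_succ_self n), h3, rfl⟩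

theorem gS_eq (m k : ℕ) : gS (m + 1) k = (boolSet (m + 1) k).ncard := by
  rw [← emb_image, Set.ncard_image_of_injective _ emb_injective]
  rfl

end Transfer

/-! ### The structure of words containing the last letter -/

/-- `w` preserves the initial segment `{0, …, k}`. -/
def Pres (k : ℕ) (w : Perm ℕ) : Prop := ∀ a ≤ k, w a ≤ k

section Structure

variable {n i j k : ℕ} {v w : Perm ℕ} {l : List ℕ}

@[simp] theorem wordN_cons (i : ℕ) (l : List ℕ) : wordN (i :: l) = actN i (wordN l) := rfl

theorem wordN_involutive (l : List ℕ) : ∀ x, wordN l (wordN l x) = x := by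
  induction l with
  | nil => exact fun _ => rfl
  | cons i l ih => exact act_involutive ih _ _

theorem wordN_fix (hl : ∀ i ∈ l, i + 1 < n) {x : ℕ} (hx : n ≤ x) : wordN l x = x := by
  induction l with
  | nil => rfl
  | cons i l ih =>
    have h1 := hl i (by simp)
    have h2 := ih fun j hj => hl j (by simp [hj])
    have h3 : swap i (i + 1) x = x := swap_apply_of_ne_of_ne (by omega) (by omega)
    rw [wordN_cons, actN, act]
    split_ifs <;> simp [h2, h3]

theorem swap_le (h : k ≠ i) {a : ℕ} (ha : a ≤ k) : swap i (i + 1) a ≤ k := by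
  rw [swap_apply_def]
  split_ifs <;> omega

theorem pres_actN (h : k ≠ i) : Pres k (actN i w) ↔ Pres k w := by
  unfold actN act
  split_ifs
  · constructor
    · intro hp a ha
      simpa using hp _ (swap_le h ha)
    · exact fun hp a ha => hp _ (swap_le h ha)
  · constructor
    · intro hp a ha
      simpa using swap_le h (hp _ (swap_le h ha))
    · exact fun hp a ha => swap_le h (hp _ (swap_le h ha))

theorem not_pres_actN (hw : ∀ x, w (w x) = x) (hp : Pres i w) : ¬ Pres i (actN i w) := by
  intro hc
  have h2 : i + 1 ≤ w (i + 1) := by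
    by_contra h
    have := hp (w (i + 1)) (by omega)
    rw [hw] at this
    omega
  unfold actN act at hc
  split_ifs at hc with hf
  · have := hc i le_rfl
    simp [hf.2] at this
  · by_cases hi : w i = i
    · have := hc i le_rfl
      simp only [Perm.mul_apply, swap_apply_left] at this
      rw [swap_apply_of_ne_of_ne (by omega) (by omega)] at this
      omega
    · have h3 : w i < i := lt_of_le_of_ne (hp i le_rfl) hi
      have := hc (w i) h3.le
      simp only [Perm.mul_apply] at this
      rw [swap_apply_of_ne_of_ne (x := w i) (by omega) (by omega), hw, swap_apply_left] at this
      omega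

theorem pres_wordN (hl : l.Nodup) : Pres k (wordN l) ↔ k ∉ l := by
  induction l with
  | nil => simp [Pres, wordN]
  | cons i l ih =>
    rw [List.nodup_cons] at hl
    rw [wordN_cons]
    by_cases hk : k = i
    · subst hk
      simpa using not_pres_actN (wordN_involutive l) ((ih hl.2).mpr hl.1)
    · rw [pres_actN hk, ih hl.2]
      simp [hk]

theorem actN_comm (h : i + 2 ≤ j) : actN i (actN j w) = actN j (actN i w) := by
  have e1 : ∀ x, swap i (i + 1) (swap j (j + 1) x) = swap j (j + 1) (swap i (i + 1) x) := by
    intro x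
    simp only [swap_apply_def]
    grind
  have f1 : swap j (j + 1) i = i := swap_apply_of_ne_of_ne (by omega) (by omega)
  have f2 : swap j (j + 1) (i + 1) = i + 1 := swap_apply_of_ne_of_ne (by omega) (by omega)
  have f3 : swap i (i + 1) j = j := swap_apply_of_ne_of_ne (by omega) (by omega)
  have f4 : swap i (i + 1) (j + 1) = j + 1 := swap_apply_of_ne_of_ne (by omega) (by omega)
  unfold actN act
  ext x
  by_cases hi : w i = i ∧ w (i + 1) = i + 1 <;> by_cases hj : w j = j ∧ w (j + 1) = j + 1 <;>
    simp [hi, hj, f1, f2, f3, f4, e1, swap_apply_eq_iff]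

/-- On a permutation `v` fixing `i, i + 1, i + 2`, the two orders of conjugation agree: both give
`v` times the transposition of `i` and `i + 2`. -/
theorem actN_braid (h0 : v i = i) (h1 : v (i + 1) = i + 1) (h2 : v (i + 2) = i + 2) :
    actN i (actN (i + 1) v) = actN (i + 1) (actN i v) := by
  have e0 : ∀ x, v x = i ↔ x = i := fun x => by rw [← h0, v.injective.eq_iff, h0]
  have e1 : ∀ x, v x = i + 1 ↔ x = i + 1 := fun x => by rw [← h1, v.injective.eq_iff, h1]
  have e2 : ∀ x, v x = i + 2 ↔ x = i + 2 := fun x => by rw [← h2, v.injective.eq_iff, h2]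
  unfold actN act
  ext x
  simp [h0, h1, h2]
  simp only [swap_apply_def]
  grind

/-- Words without repetitions containing the last letter `n` can be rearranged so that `n` acts
last, or so that `n - 1` acts last, immediately after `n`, with `n - 2` acting before both. -/
theorem word_cases : ∀ {l : List ℕ}, l.Nodup → (∀ i ∈ l, i + 1 < n + 2) → n ∈ l →
    (∃ l', l'.Nodup ∧ (∀ i ∈ l', i + 1 < n + 1) ∧ l.length = l'.length + 1 ∧
      wordN l = actN n (wordN l')) ∨
    (∃ l', l'.Nodup ∧ (∀ i ∈ l', i + 1 < n) ∧ (∃ i ∈ l', i + 2 = n) ∧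
      l.length = l'.length + 2 ∧ wordN l = actN (n - 1) (actN n (wordN l')))
  | [], _, _, h => by simp at h
  | i :: l, hnd, hlt, hmem => by
    rw [List.nodup_cons] at hnd
    have hi := hlt i (by simp)
    have hlt' : ∀ j ∈ l, j + 1 < n + 2 := fun j hj => hlt j (by simp [hj])
    by_cases hin : i = n
    · subst hin
      refine Or.inl ⟨l, hnd.2, fun j hj => ?_, rfl, rfl⟩
      have h1 := hlt' j hj
      have h2 : j ≠ i := fun e => hnd.1 (e ▸ hj)
      omega
    have hp : Pres i (wordN l) := (pres_wordN hnd.2).mpr hnd.1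
    rcases word_cases hnd.2 hlt' ((List.mem_cons.mp hmem).resolve_left (Ne.symm hin)) with
      ⟨l', h1, h2, h3, h4⟩ | ⟨l', h1, h2, ⟨p, hp1, hp2⟩, h3, h4⟩
    · have hnd' : (n :: l').Nodup := List.nodup_cons.mpr
        ⟨fun h => by have := h2 n h; omega, h1⟩
      rw [h4, ← wordN_cons, pres_wordN hnd', List.mem_cons, not_or] at hp
      by_cases hi2 : i + 2 ≤ n
      · refine Or.inl ⟨i :: l', List.nodup_cons.mpr ⟨hp.2, h1⟩, ?_, by simp [h3], ?_⟩
        · rintro j hj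
          rcases List.mem_cons.mp hj with rfl | hj
          · omega
          · exact h2 j hj
        · rw [wordN_cons, h4, actN_comm hi2, wordN_cons]
      · obtain rfl : n = i + 1 := by omega
        have h5 : ∀ j ∈ l', j + 1 < i + 1 := fun j hj => by
          have := h2 j hj
          have : j ≠ i := fun e => hp.2 (e ▸ hj)
          omega
        by_cases hq : ∃ j ∈ l', j + 2 = i + 1
        · exact Or.inr ⟨l', h1, h5, hq, by simp [h3], by rw [wordN_cons, h4]; rfl⟩
        · push Not at hq
          have h6 : ∀ j ∈ l', j + 1 < i := fun j hj => by
            have := h5 j hj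
            have := hq j hj
            omega
          refine Or.inl ⟨i :: l', List.nodup_cons.mpr ⟨hp.2, h1⟩, ?_, by simp [h3], ?_⟩
          · rintro j hj
            rcases List.mem_cons.mp hj with rfl | hj
            · omega
            · exact h2 j hj
          · rw [wordN_cons, h4, wordN_cons]
            exact actN_braid (wordN_fix h6 le_rfl) (wordN_fix h6 (by omega))
              (wordN_fix h6 (by omega))
    · have hnd' : ((n - 1) :: n :: l').Nodup := by
        refine List.nodup_cons.mpr ⟨fun h => ?_, List.nodup_cons.mpr ⟨fun h => ?_, h1⟩⟩
        · rcases List.mem_cons.mp h with h | h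
          · omega
          · have := h2 _ h
            omega
        · have := h2 _ h
          omega
      rw [h4, ← wordN_cons, ← wordN_cons, pres_wordN hnd', List.mem_cons, List.mem_cons,
        not_or, not_or] at hp
      obtain ⟨g1, g2, g3⟩ := hp
      have g4 : i ≠ p := fun e => g3 (e ▸ hp1)
      refine Or.inr ⟨i :: l', List.nodup_cons.mpr ⟨g3, h1⟩, ?_, ⟨p, by simp [hp1], hp2⟩,
        by simp [h3], ?_⟩
      · rintro j hj
        rcases List.mem_cons.mp hj with rfl | hj
        · omega
        · exact h2 j hj
      · rw [wordN_cons, h4, actN_comm (i := i) (j := n - 1) (by omega),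
          actN_comm (i := i) (j := n) (by omega), wordN_cons]

end Structure

/-! ### Recurrences -/

section Count

variable {n k : ℕ}

theorem finite_lastSet (n k : ℕ) : (lastSet n k).Finite :=
  (finite_boolSet n k).subset fun _ ⟨l, h1, h2, h3, _, h5⟩ => ⟨l, h1, h2, h3, h5⟩

theorem boolSet_succ (n k : ℕ) : boolSet (n + 1) k = boolSet n k ∪ lastSet (n + 1) k := by
  ext w
  constructor
  · rintro ⟨l, h1, h2, h3, rfl⟩
    by_cases hq : ∃ i ∈ l, i + 2 = n + 1
    · exact Or.inr ⟨l, h1, h2, h3, hq, rfl⟩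
    · push Not at hq
      refine Or.inl ⟨l, h1, fun i hi => ?_, h3, rfl⟩
      have := h2 i hi
      have := hq i hi
      omega
  · rintro (⟨l, h1, h2, h3, rfl⟩ | ⟨l, h1, h2, h3, _, rfl⟩)
    · exact ⟨l, h1, fun i hi => (h2 i hi).trans (Nat.lt_succ_self n), h3, rfl⟩
    · exact ⟨l, h1, h2, h3, rfl⟩

theorem ncard_boolSet_succ (n k : ℕ) :
    (boolSet (n + 1) k).ncard = (boolSet n k).ncard + (lastSet (n + 1) k).ncard := by
  rw [boolSet_succ]
  refine Set.ncard_union_eq ?_ (finite_boolSet _ _) (finite_lastSet _ _)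
  rw [Set.disjoint_left]
  rintro _ ⟨l, h1, h2, -, rfl⟩ ⟨l', h1', -, -, ⟨i, hi, hin⟩, he⟩
  have h3 : Pres i (wordN l) := (pres_wordN h1).mpr fun h => by have := h2 i h; omega
  rw [he, pres_wordN h1'] at h3
  exact h3 hi

theorem lastSet_eq_empty (hn : n ≤ 1) (k : ℕ) : lastSet n k = ∅ := by
  rw [Set.eq_empty_iff_forall_notMem]
  rintro _ ⟨l, -, -, -, ⟨i, hi, hin⟩, -⟩
  omega

theorem lastSet_zero (n : ℕ) : lastSet n 0 = ∅ := by
  rw [Set.eq_empty_iff_forall_notMem]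
  rintro _ ⟨l, -, -, h, ⟨i, hi, -⟩, -⟩
  simp [List.length_eq_zero_iff.mp h] at hi

theorem actN_mem_lastSet {v : Perm ℕ} (hv : v ∈ boolSet (n + 1) k) :
    actN n v ∈ lastSet (n + 2) (k + 1) := by
  obtain ⟨l, h1, h2, h3, rfl⟩ := hv
  refine ⟨n :: l, List.nodup_cons.mpr ⟨fun h => by have := h2 n h; omega, h1⟩, ?_, by simp [h3],
    ⟨n, by simp, rfl⟩, rfl⟩
  rintro i hi
  rcases List.mem_cons.mp hi with rfl | hi
  · omega
  · have := h2 i hi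
    omega

theorem actN_actN_mem_lastSet {v : Perm ℕ} (hv : v ∈ lastSet n k) :
    actN (n - 1) (actN n v) ∈ lastSet (n + 2) (k + 2) := by
  obtain ⟨l, h1, h2, h3, ⟨p, -, hp⟩, rfl⟩ := hv
  have h4 : n ∉ l := fun h => by have := h2 n h; omega
  have h5 : n - 1 ∉ l := fun h => by have := h2 _ h; omega
  refine ⟨(n - 1) :: n :: l, List.nodup_cons.mpr ⟨?_, List.nodup_cons.mpr ⟨h4, h1⟩⟩, ?_,
    by simp [h3], ⟨n, by simp, rfl⟩, rfl⟩
  · rw [List.mem_cons, not_or]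
    exact ⟨by omega, h5⟩
  · rintro i hi
    rcases List.mem_cons.mp hi with rfl | hi
    · omega
    rcases List.mem_cons.mp hi with rfl | hi
    · omega
    · have := h2 i hi
      omega

theorem lastSet_one (n : ℕ) : lastSet (n + 2) 1 = actN n '' boolSet (n + 1) 0 := by
  ext w
  constructor
  · rintro ⟨l, h1, h2, h3, ⟨p, hp1, hp2⟩, rfl⟩
    obtain rfl : p = n := by omega
    rcases word_cases h1 h2 hp1 with ⟨l', g1, g2, g3, g4⟩ | ⟨l', g1, g2, -, g3, g4⟩
    · exact ⟨_, ⟨l', g1, g2, by omega, rfl⟩, g4.symm⟩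
    · omega
  · rintro ⟨v, hv, rfl⟩
    exact actN_mem_lastSet hv

theorem lastSet_add_two (n k : ℕ) : lastSet (n + 2) (k + 2) =
    actN n '' boolSet (n + 1) (k + 1) ∪ (fun v => actN (n - 1) (actN n v)) '' lastSet n k := by
  ext w
  constructor
  · rintro ⟨l, h1, h2, h3, ⟨p, hp1, hp2⟩, rfl⟩
    obtain rfl : p = n := by omega
    rcases word_cases h1 h2 hp1 with ⟨l', g1, g2, g3, g4⟩ | ⟨l', g1, g2, g5, g3, g4⟩
    · exact Or.inl ⟨_, ⟨l', g1, g2, by omega, rfl⟩, g4.symm⟩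
    · exact Or.inr ⟨_, ⟨l', g1, g2, by omega, g5, rfl⟩, g4.symm⟩
  · rintro (⟨v, hv, rfl⟩ | ⟨v, hv, rfl⟩)
    · exact actN_mem_lastSet hv
    · exact actN_actN_mem_lastSet hv

theorem fix_of_mem_boolSet {v : Perm ℕ} (hv : v ∈ boolSet n k) {x : ℕ} (hx : n ≤ x) :
    v x = x := by
  obtain ⟨l, -, h, -, rfl⟩ := hv
  exact wordN_fix h hx

theorem actN_apply_succ_eq_iff {v : Perm ℕ} (hv : v (n + 1) = n + 1) :
    actN n v (n + 1) = n ↔ v n = n := by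
  unfold actN act
  by_cases h : v n = n
  · simp [h, hv]
  · have h1 : v n ≠ n + 1 := fun e => by
      have := v.injective (e.trans hv.symm)
      omega
    simp [h, swap_apply_eq_iff, h1]

theorem actN_injOn : Set.InjOn (actN n) (boolSet (n + 1) k) := by
  intro v hv v' hv' h
  have h1 := fix_of_mem_boolSet hv le_rfl
  have h2 := fix_of_mem_boolSet hv' le_rfl
  have h3 : v n = n ↔ v' n = n := by
    rw [← actN_apply_succ_eq_iff h1, ← actN_apply_succ_eq_iff h2, h]
  unfold actN act at h
  by_cases h4 : v n = n
  · rw [if_pos ⟨h4, h1⟩, if_pos ⟨h3.mp h4, h2⟩] at h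
    exact mul_right_cancel h
  · rw [if_neg (fun e => h4 e.1), if_neg (fun e => h4 (h3.mpr e.1))] at h
    exact mul_left_cancel (mul_right_cancel h)

/-- For a permutation fixing `n` and `n + 1`, the double conjugation is a two-sided
multiplication. -/
theorem actN_actN_eq {v : Perm ℕ} (h0 : v n = n) (h1 : v (n + 1) = n + 1) (hn : n ≠ 0) :
    actN (n - 1) (actN n v) =
      swap (n - 1) n * (v * swap n (n + 1)) * swap (n - 1) n := by
  obtain ⟨p, rfl⟩ := Nat.exists_eq_succ_of_ne_zero hn
  have h : actN (p + 1) v = v * swap (p + 1) (p + 1 + 1) := if_pos ⟨h0, h1⟩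
  simp only [Nat.succ_eq_add_one, Nat.add_sub_cancel] at *
  rw [h, actN, act, if_neg]
  rintro ⟨-, h2⟩
  simp [h1] at h2

theorem fix_of_mem_lastSet {v : Perm ℕ} (hv : v ∈ lastSet n k) {x : ℕ} (hx : n ≤ x) :
    v x = x := by
  obtain ⟨l, -, h, -, -, rfl⟩ := hv
  exact wordN_fix h hx

theorem ne_zero_of_mem_lastSet {v : Perm ℕ} (hv : v ∈ lastSet n k) : n ≠ 0 := by
  obtain ⟨l, -, -, -, ⟨i, -, hi⟩, -⟩ := hv
  omega

theorem apply_ne_of_mem_lastSet {v : Perm ℕ} (hv : v ∈ lastSet n k) : v (n - 1) ≠ n - 1 := by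
  have hfix := fun x => fix_of_mem_lastSet hv (x := x)
  obtain ⟨l, h1, h2, -, ⟨i, hi, rfl⟩, rfl⟩ := hv
  intro he
  refine (pres_wordN h1).mp (fun a ha => ?_) hi
  by_contra hc
  have h3 : wordN l (wordN l a) = wordN l a := by
    rcases (show wordN l a = i + 2 - 1 ∨ i + 2 ≤ wordN l a by omega) with h | h
    · rw [h]
      exact he
    · exact hfix _ h
  have h4 := (wordN l).injective h3
  omega

theorem actN_actN_injOn :
    Set.InjOn (fun v => actN (n - 1) (actN n v)) (lastSet n k) := by
  intro v hv v' hv' h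
  have hn := ne_zero_of_mem_lastSet hv
  simp only at h
  rw [actN_actN_eq (fix_of_mem_lastSet hv le_rfl) (fix_of_mem_lastSet hv (Nat.le_succ n)) hn,
    actN_actN_eq (fix_of_mem_lastSet hv' le_rfl) (fix_of_mem_lastSet hv' (Nat.le_succ n)) hn] at h
  exact mul_right_cancel (mul_left_cancel (mul_right_cancel h))

theorem ncard_lastSet_one (n : ℕ) : (lastSet (n + 2) 1).ncard = (boolSet (n + 1) 0).ncard := by
  rw [lastSet_one, actN_injOn.ncard_image]

theorem ncard_lastSet_add_two (n k : ℕ) : (lastSet (n + 2) (k + 2)).ncard =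
    (boolSet (n + 1) (k + 1)).ncard + (lastSet n k).ncard := by
  rw [lastSet_add_two, Set.ncard_union_eq ?_ ((finite_boolSet _ _).image _)
    ((finite_lastSet _ _).image _), actN_injOn.ncard_image, actN_actN_injOn.ncard_image]
  rw [Set.disjoint_left]
  rintro _ ⟨v, hv, rfl⟩ ⟨v', hv', he⟩
  have hn := ne_zero_of_mem_lastSet hv'
  have h0 := fix_of_mem_lastSet hv' le_rfl
  have h1 := fix_of_mem_lastSet hv' (Nat.le_succ n)
  have g1 := fix_of_mem_boolSet hv le_rfl
  simp only at he
  rw [actN_actN_eq h0 h1 hn] at he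
  -- A permutation of the first kind maps `n + 1` to `n` or fixes `n`; the second kind does neither.
  by_cases hvn : v n = n
  · have h2 := (actN_apply_succ_eq_iff g1).mpr hvn
    rw [← he] at h2
    simp only [Perm.mul_apply] at h2
    rw [swap_apply_of_ne_of_ne (x := n + 1) (by omega) (by omega), swap_apply_right, h0,
      swap_apply_right] at h2
    omega
  · have h2 : actN n v n = n := by
      simp [actN, act, hvn, g1]
    rw [← he] at h2
    simp only [Perm.mul_apply] at h2
    rw [swap_apply_right, swap_apply_of_ne_of_ne (x := n - 1) (by omega) (by omega),
      swap_apply_eq_iff, swap_apply_right] at h2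
    exact apply_ne_of_mem_lastSet hv' h2

theorem ncard_boolSet_zero (k : ℕ) : (boolSet 0 k).ncard = if k = 0 then 1 else 0 := by
  split_ifs with hk
  · rw [Set.ncard_eq_one]
    refine ⟨1, Set.ext fun w => ⟨?_, ?_⟩⟩
    · rintro ⟨l, -, -, h, rfl⟩
      rw [List.length_eq_zero_iff.mp (h.trans hk)]
      rfl
    · rintro rfl
      exact ⟨[], List.nodup_nil, by simp, by simp [hk], rfl⟩
  · rw [Set.ncard_eq_zero (finite_boolSet _ _), Set.eq_empty_iff_forall_notMem]
    rintro _ ⟨l, -, h1, h2, -⟩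
    cases l with
    | nil => exact hk h2.symm
    | cons i l => exact absurd (h1 i (by simp)) (by omega)

theorem boolSet_eq_empty (h : n < k) : boolSet n k = ∅ := by
  rw [Set.eq_empty_iff_forall_notMem]
  rintro _ ⟨l, h1, h2, h3, -⟩
  have h4 : l ⊆ List.range n := fun i hi => List.mem_range.mpr (by have := h2 i hi; omega)
  have := (h1.subperm h4).length_le
  rw [List.length_range] at this
  omega

end Count

/-! ### Generating functions -/

section GeneratingFunctions

/-- The power series `Σ f n k xⁿ tᵏ`. -/
def ser (f : ℕ → ℕ → ℤ) : MvPowerSeries (Fin 2) ℤ := fun d => f (d 0) (d 1)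

theorem coeff_ser (f : ℕ → ℕ → ℤ) (d : Fin 2 →₀ ℕ) :
    MvPowerSeries.coeff d (ser f) = f (d 0) (d 1) := rfl

theorem ser_add (f g : ℕ → ℕ → ℤ) : ser f + ser g = ser (f + g) := rfl

theorem X_zero_mul_ser (f : ℕ → ℕ → ℤ) :
    MvPowerSeries.X 0 * ser f = ser fun n k => if 1 ≤ n then f (n - 1) k else 0 := by
  ext d
  rw [MvPowerSeries.X, MvPowerSeries.coeff_monomial_mul]
  simp [coeff_ser]

theorem X_one_mul_ser (f : ℕ → ℕ → ℤ) :
    MvPowerSeries.X 1 * ser f = ser fun n k => if 1 ≤ k then f n (k - 1) else 0 := by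
  ext d
  rw [MvPowerSeries.X, MvPowerSeries.coeff_monomial_mul]
  simp [coeff_ser]

theorem one_eq_ser : (1 : MvPowerSeries (Fin 2) ℤ) =
    ser fun n k => if n = 0 ∧ k = 0 then 1 else 0 := by
  ext d
  rw [MvPowerSeries.coeff_one, coeff_ser]
  congr 1
  simp [Finsupp.ext_iff, Fin.forall_fin_two]

/-- The generating function of the sets `lastSet n k`. -/
noncomputable def Agen : MvPowerSeries (Fin 2) ℤ := ser fun n k => (lastSet n k).ncard

theorem Ggen_eq_ser : Ggen = ser fun n k => if 1 ≤ n then ((boolSet n k).ncard : ℤ) else 0 := by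
  ext d
  change (if 1 ≤ d 0 then (gS (d 0) (d 1) : ℤ) else 0) = _
  rw [coeff_ser]
  rcases d 0 with _ | n
  · rfl
  · rw [gS_eq]

theorem Ggen_eq : Ggen = MvPowerSeries.X 0 * (1 + Ggen) + Agen := by
  rw [Ggen_eq_ser, Agen, one_eq_ser, ser_add, X_zero_mul_ser, ser_add]
  congr 1
  ext n k
  rcases n with _ | _ | n
  · simp [lastSet_eq_empty]
  · simp [ncard_boolSet_succ 0, ncard_boolSet_zero]
  · simp [ncard_boolSet_succ (n + 1)]

theorem Agen_eq : Agen = MvPowerSeries.X 0 * (MvPowerSeries.X 1 * Ggen) +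
    MvPowerSeries.X 0 * (MvPowerSeries.X 0 *
      (MvPowerSeries.X 1 * (MvPowerSeries.X 1 * Agen))) := by
  rw [Ggen_eq_ser, Agen]
  simp only [X_zero_mul_ser, X_one_mul_ser, ser_add]
  congr 1
  ext n k
  rcases n with _ | _ | n
  · simp [lastSet_eq_empty]
  · simp [lastSet_eq_empty]
  rcases k with _ | _ | k
  · simp [lastSet_zero]
  · simp [ncard_lastSet_one]
  · simp [ncard_lastSet_add_two]

/-- The number of Boolean involutions in `S_n`, with value `1` at `n = 0`. -/
noncomputable def hB (n : ℕ) : ℕ := ∑ k ∈ Finset.range (n + 1), (boolSet n k).ncard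

/-- The number of Boolean involutions in `S_n` whose support contains the last letter. -/
noncomputable def hA (n : ℕ) : ℕ := ∑ k ∈ Finset.range (n + 1), (lastSet n k).ncard

theorem lastSet_eq_empty_of_lt {n k : ℕ} (h : n < k) : lastSet n k = ∅ :=
  Set.eq_empty_of_subset_empty fun _ ⟨l, h1, h2, h3, _, h5⟩ =>
    boolSet_eq_empty h ▸ (⟨l, h1, h2, h3, h5⟩ : _ ∈ boolSet n k)

theorem hS_succ (m : ℕ) : hS (m + 1) = hB (m + 1) := by
  classical
  rw [hS, Nat.card_eq_fintype_card, Fintype.card_subtype, Finset.card_eq_sum_card_fiberwise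
    (f := fun w => (invCount w + excCount w) / 2) (t := Finset.range (m + 1 + 1))]
  · refine Finset.sum_congr rfl fun k _ => ?_
    rw [← gS_eq, gS, Nat.card_eq_fintype_card, Fintype.card_subtype, Finset.filter_filter]
    simp only [and_assoc]
  · intro w hw
    have hw' := (Finset.mem_filter.1 hw).2
    obtain ⟨l, hl, hk, -⟩ := boolean_rank_iff.1 ⟨hw'.1, hw'.2, rfl⟩
    have := hl.length_le_card
    rw [Fintype.card_fin] at this
    simp only [Finset.coe_range, Set.mem_Iio]
    omega

theorem hB_succ (n : ℕ) : hB (n + 1) = hB n + hA (n + 1) := by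
  simp only [hB, hA, ncard_boolSet_succ, Finset.sum_add_distrib]
  rw [Finset.sum_range_succ (fun k => (boolSet n k).ncard) (n + 1),
    boolSet_eq_empty (Nat.lt_succ_self n)]
  simp

theorem hA_add_two (n : ℕ) : hA (n + 2) = hB (n + 1) + hA n := by
  rw [hA, Finset.sum_range_succ', Finset.sum_range_succ', lastSet_zero]
  simp only [ncard_lastSet_add_two, zero_add, ncard_lastSet_one, Finset.sum_add_distrib,
    Set.ncard_empty]
  rw [hB, Finset.sum_range_succ' (fun k => (boolSet (n + 1) k).ncard), hA]
  ring

theorem hA_eq_zero {n : ℕ} (hn : n ≤ 1) : hA n = 0 := by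
  simp [hA, lastSet_eq_empty hn]

theorem hB_zero : hB 0 = 1 := by
  simp [hB, ncard_boolSet_zero]

/-- The generating function of `hA`. -/
noncomputable def HAgen : PowerSeries ℤ := PowerSeries.mk fun n => (hA n : ℤ)

theorem coeff_Hgen_succ (n : ℕ) : PowerSeries.coeff (n + 1) Hgen = hB (n + 1) := by
  simp [Hgen, hS_succ]

theorem coeff_Hgen_zero : PowerSeries.coeff 0 Hgen = 0 := by
  rw [Hgen, PowerSeries.coeff_mk, if_neg (by decide)]

theorem Hgen_eq : Hgen = PowerSeries.X * (1 + Hgen) + HAgen := by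
  ext n
  rcases n with _ | _ | n
  · rw [map_add, PowerSeries.coeff_zero_X_mul, coeff_Hgen_zero]
    simp [HAgen, hA_eq_zero]
  · rw [map_add, PowerSeries.coeff_succ_X_mul, map_add, coeff_Hgen_zero, coeff_Hgen_succ]
    simp [HAgen, hB_succ 0, hB_zero]
  · rw [map_add, PowerSeries.coeff_succ_X_mul, map_add, coeff_Hgen_succ, coeff_Hgen_succ]
    simp [HAgen, hB_succ (n + 1), PowerSeries.coeff_one]

theorem HAgen_eq : HAgen = PowerSeries.X * Hgen + PowerSeries.X * (PowerSeries.X * HAgen) := by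
  ext n
  rcases n with _ | _ | n
  · simp [HAgen, hA_eq_zero]
  · rw [map_add, PowerSeries.coeff_succ_X_mul, PowerSeries.coeff_succ_X_mul, coeff_Hgen_zero,
      PowerSeries.coeff_zero_X_mul]
    simp [HAgen, hA_eq_zero]
  · rw [map_add, PowerSeries.coeff_succ_X_mul, PowerSeries.coeff_succ_X_mul, coeff_Hgen_succ,
      PowerSeries.coeff_succ_X_mul]
    simp [HAgen, hA_add_two]

end GeneratingFunctions

end BoolInv

/-- `((1 - x²t²)(1 - x) - xt) · Σ g(Sₙ,k) xⁿ tᵏ = x(1 - x²t²)` and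
`(1 - 2x - x² + x³) · Σ h(Sₙ) xⁿ = x(1 - x²)`. -/
theorem gS_hS_generating_functions :
    ((1 - (MvPowerSeries.X 0 : MvPowerSeries (Fin 2) ℤ) ^ 2 * MvPowerSeries.X 1 ^ 2)
        * (1 - MvPowerSeries.X 0) - MvPowerSeries.X 0 * MvPowerSeries.X 1) * Ggen
      = MvPowerSeries.X 0 * (1 - MvPowerSeries.X 0 ^ 2 * MvPowerSeries.X 1 ^ 2) ∧
    (1 - 2 * (PowerSeries.X : PowerSeries ℤ) - PowerSeries.X ^ 2 + PowerSeries.X ^ 3) * Hgen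
      = PowerSeries.X * (1 - PowerSeries.X ^ 2) := by
  -- Eliminate the generating functions of the involutions whose support has the last letter.
  constructor
  · linear_combination (1 - (MvPowerSeries.X 0 : MvPowerSeries (Fin 2) ℤ) ^ 2 *
      MvPowerSeries.X 1 ^ 2) * BoolInv.Ggen_eq + BoolInv.Agen_eq
  · linear_combination (1 - (PowerSeries.X : PowerSeries ℤ) ^ 2) * BoolInv.Hgen_eq +
      BoolInv.HAgen_eq
end

section
/- For every involution w ∈ I(S_n), the path ψ(w) is a Motzkin path of length n; moreover, the map ψ restricted to the set of Boolean involutions in I(S_n) is a bijection onto the set M_n^r of restricted Motzkin paths of length n. -/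
/-- The `k`-th step of the lattice path `ψ(w)`: a flatstep (`0`) if `w k = k`,
an upstep (`1`) if `w k > k` (an excedance), and a downstep (`-1`) if `w k < k`
(a deficiency). -/
def motzkinStep {n : ℕ} (w : Equiv.Perm (Fin n)) (k : Fin n) : ℤ :=
  if w k = k then 0 else if k < w k then 1 else -1

/-- `st` is the step sequence of a Motzkin path of length `n`: every step is an
upstep, flatstep or downstep, the path never goes below the `x`-axis, and it ends
at height `0`. -/
def IsMotzkinSteps {n : ℕ} (st : Fin n → ℤ) : Prop :=
  (∀ k : Fin n, st k = 1 ∨ st k = 0 ∨ st k = -1) ∧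
  (∀ k : ℕ, 0 ≤ ∑ j ∈ Finset.univ.filter (fun j : Fin n => (j : ℕ) < k), st j) ∧
  (∑ j, st j = 0)

/-- `st` is the step sequence of a restricted Motzkin path of length `n`:
a Motzkin path that never goes above level `2` and whose flatsteps all occur at
level at most `1`. -/
def IsRestrictedMotzkinSteps {n : ℕ} (st : Fin n → ℤ) : Prop :=
  IsMotzkinSteps st ∧
  (∀ k : ℕ, (∑ j ∈ Finset.univ.filter (fun j : Fin n => (j : ℕ) < k), st j) ≤ 2) ∧
  (∀ k : Fin n, st k = 0 →
    (∑ j ∈ Finset.univ.filter (fun j : Fin n => (j : ℕ) < (k : ℕ)), st j) ≤ 1)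

namespace MotzkinBijection

open Finset Equiv

/-- The rank function of a permutation: the number of positions `x < p` with value `≥ q`
(positions and values counted from `0`). For an involution and `p ≤ q` it counts the arcs
that pass over all of `[p, q)`; for `p = q`, the arcs crossing the gap just before `p`. -/
def rk {n : ℕ} (w : Perm (Fin n)) (p q : ℕ) : ℕ :=
  (univ.filter fun x : Fin n => (x : ℕ) < p ∧ q ≤ (w x : ℕ)).card

/-- Pointwise comparison of rank functions. -/
def Dom {n : ℕ} (u w : Perm (Fin n)) : Prop := ∀ p q, rk u p q ≤ rk w p q

lemma one_le_rk {n : ℕ} {w : Perm (Fin n)} {p q : ℕ} :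
    1 ≤ rk w p q ↔ ∃ x : Fin n, (x : ℕ) < p ∧ q ≤ (w x : ℕ) := by
  unfold rk
  rw [Nat.one_le_iff_ne_zero, ← Nat.pos_iff_ne_zero, Finset.card_pos]
  simp [Finset.Nonempty]

lemma two_le_rk {n : ℕ} {w : Perm (Fin n)} {p q : ℕ} :
    2 ≤ rk w p q ↔ ∃ x y : Fin n, x ≠ y ∧ ((x : ℕ) < p ∧ q ≤ (w x : ℕ)) ∧
      ((y : ℕ) < p ∧ q ≤ (w y : ℕ)) := by
  unfold rk
  rw [show (2 : ℕ) = 1 + 1 from rfl, Nat.succ_le_iff, Finset.one_lt_card]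
  simp only [mem_filter, mem_univ, true_and]
  constructor
  · rintro ⟨a, ha, b, hb, h⟩; exact ⟨a, b, h, ha, hb⟩
  · rintro ⟨a, b, h, ha, hb⟩; exact ⟨a, ha, b, hb, h⟩

lemma Dom.refl {n : ℕ} (u : Perm (Fin n)) : Dom u u := fun _ _ => le_rfl

lemma Dom.trans {n : ℕ} {u v w : Perm (Fin n)} (huv : Dom u v) (hvw : Dom v w) :
    Dom u w :=
  fun p q => (huv p q).trans (hvw p q)

/-! ### Rank comparison characterises the Bruhat order -/

/-- Exchanging an increasing pair of values creates inversions. An inversion `(p, q)` of `u` is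
sent to `(t p, t q)`, or to itself when `t` reverses the order of `p` and `q`; the pair `(i, j)`
is missed. -/
lemma invCount_lt {n : ℕ} (u : Perm (Fin n)) {i j : Fin n} (hij : i < j) (h : u i < u j) :
    invCount u < invCount (u * swap i j) := by
  unfold invCount
  have hmem : (i, j) ∈ univ.filter (fun p : Fin n × Fin n => p.1 < p.2 ∧
      (u * swap i j) p.2 < (u * swap i j) p.1) := by
    rw [mem_filter]
    simp [hij, h]
  rw [← Finset.card_erase_add_one hmem, Nat.lt_succ_iff]
  have hs : ∀ x, swap i j x = if x = i then j else if x = j then i else x :=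
    fun x => swap_apply_def i j x
  apply Finset.card_le_card_of_injOn (fun p => if swap i j p.1 < swap i j p.2 then
    (swap i j p.1, swap i j p.2) else p)
  · rintro ⟨p, q⟩ hp
    simp only [coe_filter, mem_univ, true_and, Set.mem_ofPred_eq] at hp
    obtain ⟨hpq, hu⟩ := hp
    rw [mem_coe, mem_erase, mem_filter]
    simp only [mem_univ, true_and, Perm.mul_apply]
    split_ifs with hlt
    · refine ⟨?_, hlt, by simpa using hu⟩
      simp only [ne_eq, Prod.mk.injEq]
      simp only [hs] at *
      grind
    · simp only [ne_eq, Prod.mk.injEq]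
      simp only [hs] at *
      grind
  · rintro ⟨p, q⟩ hp ⟨p', q'⟩ hp' heq
    simp only [coe_filter, mem_univ, true_and, Set.mem_ofPred_eq] at hp hp'
    have e1 : ∀ x, swap i j (swap i j x) = x := fun x => swap_apply_self i j x
    dsimp only at heq
    split_ifs at heq with h1 h2 h2 <;> simp only [Prod.mk.injEq] at heq ⊢
    · exact ⟨(swap i j).injective heq.1, (swap i j).injective heq.2⟩
    · rw [← heq.1, ← heq.2, e1, e1] at h2; exact absurd hp.1 h2
    · rw [heq.1, heq.2, e1, e1] at h1; exact absurd hp'.1 h1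
    · exact heq

lemma dom_mul_swap {n : ℕ} (u : Perm (Fin n)) {i j : Fin n} (hij : i < j) (h : u i < u j) :
    Dom u (u * swap i j) := by
  intro p q
  unfold rk
  have hs : ∀ x, swap i j x = if x = i then j else if x = j then i else x :=
    fun x => swap_apply_def i j x
  -- Position `j` leaves the counted set when `u i < q ≤ u j`; then `i` enters it instead.
  apply Finset.card_le_card_of_injOn
    (fun x => if x = j ∧ ¬ (q ≤ (u i : ℕ)) then i else x)
  · intro x hx
    simp only [coe_filter, mem_univ, true_and, Set.mem_ofPred_eq, Perm.mul_apply, hs] at hx ⊢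
    grind
  · intro x hx y hy hxy
    simp only [coe_filter, mem_univ, true_and, Set.mem_ofPred_eq] at hx hy hxy
    grind

/-- One step of the Bruhat order. -/
def BStep {n : ℕ} (u v : Perm (Fin n)) : Prop :=
  ∃ t, IsTransposition t ∧ v = u * t ∧ invCount u < invCount v

lemma bruhatLE_refl {n : ℕ} (u : Perm (Fin n)) : BruhatLE u u :=
  ⟨[], by simp, by simp, by simp⟩

lemma BruhatLE.head {n : ℕ} {u v w : Perm (Fin n)} (h : BStep u v) (h' : BruhatLE v w) :
    BruhatLE u w := by
  obtain ⟨t, ht, rfl, hlt⟩ := h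
  obtain ⟨ts, h1, h2, h3⟩ := h'
  refine ⟨t :: ts, ?_, by simpa using h2, ?_⟩
  · intro s hs
    rcases List.mem_cons.1 hs with rfl | hs
    · exact ht
    · exact h1 s hs
  · intro k hk
    cases k with
    | zero => simpa using hlt
    | succ k => simpa using h3 k (by simpa using hk)

lemma BStep.dom {n : ℕ} {u v : Perm (Fin n)} (h : BStep u v) : Dom u v := by
  obtain ⟨t, ⟨i, j, hne, rfl⟩, rfl, hlt⟩ := h
  wlog hij : i < j generalizing i j
  · rw [swap_comm] at hlt ⊢
    exact this j i hne.symm hlt (lt_of_le_of_ne (not_lt.1 hij) hne.symm)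
  rcases lt_trichotomy (u i) (u j) with h | h | h
  · exact dom_mul_swap u hij h
  · exact absurd (u.injective h) hne
  · have := invCount_lt (u * swap i j) hij (by simpa using h)
    rw [mul_assoc, swap_mul_self, mul_one] at this
    omega

lemma BruhatLE.dom {n : ℕ} {u w : Perm (Fin n)} (h : BruhatLE u w) : Dom u w := by
  obtain ⟨ts, h1, h2, h3⟩ := h
  induction ts generalizing u with
  | nil => simp at h2; subst h2; exact Dom.refl _
  | cons t ts ih =>
    have hs : BStep u (u * t) := ⟨t, h1 t (by simp), rfl, by simpa using h3 0 (by simp)⟩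
    refine hs.dom.trans (ih (fun s hs => h1 s (by simp [hs])) (by simpa using h2) ?_)
    intro k hk
    simpa using h3 (k + 1) (by simpa using hk)

/-- At the first position where they differ, the dominated permutation has the smaller value. -/
lemma Dom.first_diff {n : ℕ} {u w : Perm (Fin n)} (h : Dom u w) {i : Fin n}
    (hne : u i ≠ w i) (hmin : ∀ x < i, u x = w x) : u i < w i := by
  by_contra hcon
  have hlt : w i < u i := lt_of_le_of_ne (not_lt.1 hcon) hne.symm
  have := h (i + 1) (u i)
  refine absurd this (not_le.2 ?_)
  unfold rk
  apply Finset.card_lt_card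
  rw [Finset.ssubset_iff_of_subset]
  · exact ⟨i, by simp, by simp [hlt]⟩
  · intro x hx
    simp only [mem_filter, mem_univ, true_and] at hx ⊢
    have : x ≠ i := by rintro rfl; have := hx.2; omega
    have := hmin x (by grind)
    grind

lemma exists_first_diff {n : ℕ} {u w : Perm (Fin n)} (h : u ≠ w) :
    ∃ i, u i ≠ w i ∧ ∀ x < i, u x = w x := by
  have hne : (univ.filter fun i => u i ≠ w i).Nonempty := by
    by_contra hcon
    rw [Finset.not_nonempty_iff_eq_empty, Finset.filter_eq_empty_iff] at hcon
    exact h (Equiv.ext fun x => by simpa using hcon (mem_univ x))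
  refine ⟨_, (mem_filter.1 (min'_mem _ hne)).2, fun x hx => ?_⟩
  by_contra hcon
  exact absurd (min'_le _ x (by simp [hcon])) (not_le.2 hx)

lemma Dom.antisymm {n : ℕ} {u w : Perm (Fin n)} (h : Dom u w) (h' : Dom w u) : u = w := by
  by_contra hne
  obtain ⟨i, hi, hmin⟩ := exists_first_diff hne
  exact lt_asymm (h.first_diff hi hmin) (h'.first_diff hi.symm fun x hx => (hmin x hx).symm)

lemma rk_split {n : ℕ} (u : Perm (Fin n)) (p : ℕ) {q r : ℕ} (hqr : q ≤ r) :
    rk u p q = rk u p r +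
      (univ.filter fun x : Fin n => (x : ℕ) < p ∧ q ≤ (u x : ℕ) ∧ (u x : ℕ) < r).card := by
  unfold rk
  rw [← Finset.card_union_of_disjoint]
  · congr 1; ext x; simp; omega
  · rw [Finset.disjoint_left]; intro x; simp; omega

/-- A dominated permutation can be raised by one transposition while staying dominated. With `i`
the first difference and `j > i` the first position with `u i < u j ≤ w i`, the exchange of
`u i` and `u j` raises `rk u` by one on `i < p ≤ j`, `u i < q ≤ u j`, where `rk u < rk w`. -/
lemma Dom.exists_step {n : ℕ} {u w : Perm (Fin n)} (h : Dom u w) (hne : u ≠ w) :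
    ∃ v, BStep u v ∧ Dom v w := by
  obtain ⟨i, hi, hmin⟩ := exists_first_diff hne
  have hlt := h.first_diff hi hmin
  have hJ : (univ.filter fun j => i < j ∧ u i < u j ∧ u j ≤ w i).Nonempty := by
    refine ⟨u.symm (w i), ?_⟩
    simp only [mem_filter, mem_univ, true_and, apply_symm_apply, le_refl, and_true]
    refine ⟨?_, hlt⟩
    by_contra hcon
    rcases lt_or_eq_of_le (not_lt.1 hcon) with hc | hc
    · have := hmin _ hc
      rw [apply_symm_apply] at this
      exact absurd (w.injective this) hc.ne'
    · exact hi (by have := u.apply_symm_apply (w i); rwa [hc] at this)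
  obtain ⟨j, hj, hjmin⟩ : ∃ j, (i < j ∧ u i < u j ∧ u j ≤ w i) ∧
      ∀ x, i < x → x < j → ¬ (u i < u x ∧ u x ≤ w i) := by
    refine ⟨_, (mem_filter.1 (min'_mem _ hJ)).2, fun x hix hx hcon => ?_⟩
    exact absurd (min'_le _ x (by simp [hcon, hix])) (not_le.2 hx)
  obtain ⟨hij, huij, hjw⟩ := hj
  refine ⟨u * swap i j, ⟨_, ⟨i, j, hij.ne, rfl⟩, rfl, invCount_lt u hij huij⟩, fun p q => ?_⟩
  have hs : ∀ x, swap i j x = if x = i then j else if x = j then i else x :=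
    fun x => swap_apply_def i j x
  by_cases hpq : ((i : ℕ) < p ∧ p ≤ j) ∧ ((u i : ℕ) < q ∧ q ≤ u j)
  · obtain ⟨⟨hp1, hp2⟩, hq1, hq2⟩ := hpq
    have hle : rk (u * swap i j) p q ≤ rk u p q + 1 := by
      unfold rk
      refine (Finset.card_le_card (t := insert i _) ?_).trans (Finset.card_insert_le _ _)
      intro x hx
      simp only [mem_insert, mem_filter, mem_univ, true_and, Perm.mul_apply, hs] at hx ⊢
      grind
    have hr : q ≤ (w i : ℕ) + 1 := by have : (u j : ℕ) ≤ w i := hjw; omega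
    rw [rk_split u p hr] at hle
    rw [rk_split w p hr]
    have h1 := h p ((w i : ℕ) + 1)
    have h2 : (univ.filter fun x : Fin n => (x : ℕ) < p ∧ q ≤ (u x : ℕ) ∧
          (u x : ℕ) < (w i : ℕ) + 1).card <
        (univ.filter fun x : Fin n => (x : ℕ) < p ∧ q ≤ (w x : ℕ) ∧
          (w x : ℕ) < (w i : ℕ) + 1).card := by
      apply Finset.card_lt_card
      rw [Finset.ssubset_iff_of_subset]
      · refine ⟨i, ?_, ?_⟩
        · simp only [mem_filter, mem_univ, true_and]
          have : (u j : ℕ) ≤ w i := hjw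
          omega
        · simp only [mem_filter, mem_univ, true_and]
          omega
      · intro x hx
        simp only [mem_filter, mem_univ, true_and] at hx ⊢
        rcases lt_trichotomy x i with hxi | hxi | hxi
        · rw [← hmin x hxi]; exact hx
        · subst hxi; omega
        · exfalso
          apply hjmin x hxi (by grind)
          grind
    omega
  · -- Elsewhere, if position `i` enters the counted set, then `j` leaves it.
    refine le_trans ?_ (h p q)
    unfold rk
    apply Finset.card_le_card_of_injOn
      (fun x => if x = i ∧ ¬ (q ≤ (u i : ℕ)) then j else x)
    · intro x hx
      simp only [coe_filter, mem_univ, true_and, Set.mem_ofPred_eq, Perm.mul_apply, hs] at hx ⊢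
      grind
    · intro x hx y hy hxy
      simp only [coe_filter, mem_univ, true_and, Set.mem_ofPred_eq, Perm.mul_apply, hs] at hx hy hxy
      grind

lemma invCount_le {n : ℕ} (u : Perm (Fin n)) : invCount u ≤ n * n := by
  unfold invCount
  refine (Finset.card_le_univ _).trans ?_
  simp

lemma Dom.bruhatLE {n : ℕ} {u w : Perm (Fin n)} (h : Dom u w) : BruhatLE u w := by
  by_cases hne : u = w
  · subst hne; exact bruhatLE_refl _
  · obtain ⟨v, hv, hvw⟩ := h.exists_step hne
    exact BruhatLE.head hv hvw.bruhatLE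
termination_by n * n - invCount u
decreasing_by
  obtain ⟨t, -, -, hlt⟩ := hv
  have := invCount_le v
  omega

lemma bruhatLE_iff {n : ℕ} {u w : Perm (Fin n)} : BruhatLE u w ↔ Dom u w :=
  ⟨BruhatLE.dom, Dom.bruhatLE⟩

/-! ### Involutions and the forbidden configuration -/

lemma invol_apply {n : ℕ} {w : Perm (Fin n)} (hw : IsInvolution w) (x : Fin n) :
    w (w x) = x := by
  have := congrArg (fun π : Perm (Fin n) => π x) hw
  simpa using this

lemma isInvolution_of {n : ℕ} {w : Perm (Fin n)} (hw : ∀ x, w (w x) = x) : IsInvolution w :=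
  Equiv.ext fun x => by simpa using hw x

/-- The rank function of an involution is symmetric up to a term that does not depend on the
involution. -/
lemma rk_symm {n : ℕ} {w : Perm (Fin n)} (hw : IsInvolution w) (p q : ℕ) :
    rk w p q + (univ.filter fun x : Fin n => (x : ℕ) < q).card =
      rk w q p + (univ.filter fun x : Fin n => (x : ℕ) < p).card := by
  have h : ∀ p q : ℕ, (univ.filter fun x : Fin n => (x : ℕ) < p).card =
      rk w p q + (univ.filter fun x : Fin n => (x : ℕ) < p ∧ (w x : ℕ) < q).card := by
    intro p q
    unfold rk
    rw [← Finset.card_union_of_disjoint]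
    · congr 1; ext x; simp; omega
    · rw [Finset.disjoint_left]; intro x; simp; omega
  have h' : (univ.filter fun x : Fin n => (x : ℕ) < p ∧ (w x : ℕ) < q).card =
      (univ.filter fun x : Fin n => (x : ℕ) < q ∧ (w x : ℕ) < p).card := by
    apply Finset.card_bij (fun x _ => w x)
    · intro x hx
      simp only [mem_filter, mem_univ, true_and] at hx ⊢
      rw [invol_apply hw]; exact hx.symm
    · intro x _ y _ hxy; exact w.injective hxy
    · intro y hy
      simp only [mem_filter, mem_univ, true_and] at hy
      refine ⟨w y, ?_, invol_apply hw y⟩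
      simp only [mem_filter, mem_univ, true_and]
      rw [invol_apply hw]; exact hy.symm
  have h1 := h p q
  have h2 := h q p
  omega

lemma dom_of_upper {n : ℕ} {u w : Perm (Fin n)} (hu : IsInvolution u) (hw : IsInvolution w)
    (h : ∀ p q, p ≤ q → rk u p q ≤ rk w p q) : Dom u w := by
  intro p q
  rcases le_total p q with hpq | hpq
  · exact h p q hpq
  · have h1 := rk_symm hu p q
    have h2 := rk_symm hw p q
    have := h q p hpq
    omega

/-- No gap is crossed by two arcs while the two positions next to it lie strictly below a common
arc. For involutions this is avoidance of `4321`, `45312` and `456123`. -/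
def Good {n : ℕ} (w : Perm (Fin n)) : Prop :=
  ∀ k, ¬ (2 ≤ rk w (k + 1) (k + 1) ∧ 1 ≤ rk w k (k + 2))

lemma Good.mono {n : ℕ} {u w : Perm (Fin n)} (hw : Good w) (h : Dom u w) : Good u :=
  fun k hk => hw k ⟨hk.1.trans (h _ _), hk.2.trans (h _ _)⟩

lemma Good.elim {n : ℕ} {w : Perm (Fin n)} (hw : Good w) (k : ℕ) {x y z : Fin n} (hne : x ≠ y)
    (hx : (x : ℕ) ≤ k) (hx' : k < (w x : ℕ)) (hy : (y : ℕ) ≤ k) (hy' : k < (w y : ℕ))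
    (hz : (z : ℕ) < k) (hz' : k + 1 < (w z : ℕ)) : False :=
  hw k ⟨two_le_rk.2 ⟨x, y, hne, by omega, by omega⟩, one_le_rk.2 ⟨z, by omega⟩⟩

lemma Good.nonnesting {n : ℕ} {w : Perm (Fin n)} (hw : Good w) {x y : Fin n} (hxy : x < y)
    (hy : y < w y) : w x < w y := by
  by_contra hcon
  have hne : w x ≠ w y := fun h => hxy.ne (w.injective h)
  have h1 : (w y : ℕ) < w x := by
    have : w y < w x := lt_of_le_of_ne (not_lt.1 hcon) hne.symm
    exact this
  have h2 : (x : ℕ) < y := hxy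
  have h3 : (y : ℕ) < w y := hy
  exact hw.elim (y : ℕ) (x := x) (y := y) (z := x) hxy.ne (by omega) (by omega) (by omega)
    (by omega) (by omega) (by omega)

/-- Each position lies strictly below at most one arc. -/
lemma Good.cover {n : ℕ} {w : Perm (Fin n)} (hw : Good w) {x y : Fin n} (z : ℕ)
    (hx : (x : ℕ) < z) (hx' : z < (w x : ℕ)) (hy : (y : ℕ) < z) (hy' : z < (w y : ℕ)) : x = y := by
  by_contra hne
  wlog hxy : x < y generalizing x y
  · exact this hy hy' hx hx' (Ne.symm hne) (lt_of_le_of_ne (not_lt.1 hxy) (Ne.symm hne))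
  have h1 : (x : ℕ) < y := hxy
  have h2 : (w x : ℕ) < w y := hw.nonnesting hxy (Fin.lt_def.2 (by omega))
  exact hw.elim z (x := x) (y := y) (z := y) hne (by omega) (by omega) (by omega)
    (by omega) (by omega) (by omega)

/-- At most two arcs cross a gap. -/
lemma Good.rk_diag_le {n : ℕ} {w : Perm (Fin n)} (hw : Good w) (p : ℕ) : rk w p p ≤ 2 := by
  by_contra hcon
  have h3 : 2 < rk w p p := not_le.1 hcon
  unfold rk at h3
  rw [Finset.two_lt_card] at h3
  obtain ⟨a, ha, b, hb, c, hc, hab, hac, hbc⟩ := h3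
  simp only [mem_filter, mem_univ, true_and] at ha hb hc
  -- The middle one of three pairwise crossing arcs covers both sides of the gap.
  have key : ∀ x y z : Fin n, x < y → y < z → ((x : ℕ) < p ∧ p ≤ (w x : ℕ)) →
      ((y : ℕ) < p ∧ p ≤ (w y : ℕ)) → ((z : ℕ) < p ∧ p ≤ (w z : ℕ)) → False := by
    intro x y z hxy hyz hx hy hz
    have h1 : (w x : ℕ) < w y := hw.nonnesting hxy (Fin.lt_def.2 (by omega))
    have h2 : (y : ℕ) < z := hyz
    exact hw.elim (p - 1) (x := x) (y := y) (z := y) hxy.ne (by omega) (by omega) (by omega)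
      (by omega) (by omega) (by omega)
  rcases lt_or_gt_of_ne hab with h | h <;> rcases lt_or_gt_of_ne hac with h' | h' <;>
    rcases lt_or_gt_of_ne hbc with h'' | h'' <;>
    first
    | exact key a b c ‹_› ‹_› ha hb hc
    | exact key a c b ‹_› ‹_› ha hc hb
    | exact key b a c ‹_› ‹_› hb ha hc
    | exact key b c a ‹_› ‹_› hb hc ha
    | exact key c a b ‹_› ‹_› hc ha hb
    | exact key c b a ‹_› ‹_› hc hb ha

lemma Good.rk_off_le {n : ℕ} {w : Perm (Fin n)} (hw : Good w) {p q : ℕ} (hpq : p < q) :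
    rk w p q ≤ 1 := by
  by_contra hcon
  obtain ⟨x, y, hne, hx, hy⟩ := two_le_rk.1 (not_le.1 hcon)
  exact hne (hw.cover p (by omega) (by omega) (by omega) (by omega))

/-! ### Below a good involution, supports determine the order -/

/-- If every gap of `[p, q]` is crossed in `v ≤ w` and a single arc of `w` passes over `[p, q]`,
then so does an arc of `v`: otherwise two arcs of `v` would cross inside. -/
lemma fill {n : ℕ} {v w : Perm (Fin n)} (hv : IsInvolution v) (hw : Good w) (h : Dom v w)
    {p q : ℕ} (hpq : p ≤ q) (hs : ∀ m, p ≤ m → m ≤ q → 1 ≤ rk v m m) (hpw : 1 ≤ rk w p q) :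
    1 ≤ rk v p q := by
  have key : ∀ d, p + d ≤ q → 1 ≤ rk v p (p + d) := by
    intro d
    induction d with
    | zero => intro _; exact hs p le_rfl hpq
    | succ d ih =>
      intro hd
      obtain ⟨x, hx, hx'⟩ := one_le_rk.1 (ih (by omega))
      obtain ⟨y, hy, hy'⟩ := one_le_rk.1 (hs (p + (d + 1)) (by omega) hd)
      rw [one_le_rk]
      by_cases hc : p + (d + 1) ≤ (v x : ℕ)
      · exact ⟨x, hx, hc⟩
      by_cases hyp : (y : ℕ) < p
      · exact ⟨y, hyp, hy'⟩
      exfalso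
      have hvx : (v x : ℕ) = p + d := by omega
      have hyx : y ≠ v x := by
        rintro rfl
        rw [invol_apply hv] at hy'
        omega
      have hyx' : (y : ℕ) ≠ v x := fun e => hyx (Fin.ext e)
      refine hw y ⟨le_trans (two_le_rk.2 ⟨x, y, ?_, by omega, by omega⟩) (h _ _), ?_⟩
      · rintro rfl; omega
      · obtain ⟨z, hz, hz'⟩ := one_le_rk.1 hpw
        exact one_le_rk.2 ⟨z, by omega, by omega⟩
  obtain ⟨d, rfl⟩ := Nat.exists_eq_add_of_le hpq
  exact key d le_rfl

/-- The support of `w`: the set of gaps crossed by some arc. -/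
def supp {n : ℕ} (w : Perm (Fin n)) : Finset ℕ := (range n).filter fun p => 1 ≤ rk w p p

lemma mem_supp {n : ℕ} {w : Perm (Fin n)} {p : ℕ} : p ∈ supp w ↔ 1 ≤ rk w p p := by
  unfold supp
  rw [mem_filter, mem_range, and_iff_right_iff_imp, one_le_rk]
  rintro ⟨x, -, hx⟩
  exact hx.trans_lt (w x).isLt

lemma Dom.supp_subset {n : ℕ} {u w : Perm (Fin n)} (h : Dom u w) : supp u ⊆ supp w :=
  fun p hp => mem_supp.2 ((mem_supp.1 hp).trans (h p p))

lemma dom_of_supp_subset {n : ℕ} {u v w : Perm (Fin n)} (hu : IsInvolution u)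
    (hv : IsInvolution v) (hw : Good w) (huw : Dom u w) (hvw : Dom v w)
    (hs : supp u ⊆ supp v) : Dom u v := by
  refine dom_of_upper hu hv fun p q hpq => ?_
  have hs' : ∀ m, 1 ≤ rk u m m → 1 ≤ rk v m m := fun m hm => mem_supp.1 (hs (mem_supp.2 hm))
  by_cases h0 : rk u p q = 0
  · omega
  have h1 : 1 ≤ rk u p q := by omega
  have hfill : 1 ≤ rk v p q := by
    refine fill hv hw hvw hpq (fun m hm hm' => hs' m ?_) (h1.trans (huw _ _))
    obtain ⟨x, hx⟩ := one_le_rk.1 h1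
    exact one_le_rk.2 ⟨x, by omega, by omega⟩
  rcases lt_or_eq_of_le hpq with hlt | rfl
  · exact ((hw.mono huw).rk_off_le hlt).trans hfill
  by_cases h2 : 2 ≤ rk u p p
  swap
  · omega
  refine ((hw.mono huw).rk_diag_le p).trans ?_
  -- Both gaps next to `p` are crossed in `u`, hence in `v`, but no arc of `v` passes over both.
  obtain ⟨x, y, hxy, hx, hy⟩ := two_le_rk.1 h2
  have hxy' : (x : ℕ) ≠ y := fun e => hxy (Fin.ext e)
  have huxy' : (u x : ℕ) ≠ u y := fun e => hxy (u.injective (Fin.ext e))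
  obtain ⟨k, rfl⟩ : ∃ k, p = k + 1 := ⟨p - 1, by omega⟩
  have hl : 1 ≤ rk v k k := hs' k <| one_le_rk.2 <| by
    by_cases hc : (x : ℕ) < k
    · exact ⟨x, by omega, by omega⟩
    · exact ⟨y, by omega, by omega⟩
  have hr : 1 ≤ rk v (k + 2) (k + 2) := hs' _ <| one_le_rk.2 <| by
    by_cases hc : k + 2 ≤ (u x : ℕ)
    · exact ⟨x, by omega, by omega⟩
    · exact ⟨y, by omega, by omega⟩
  have hno : ¬ 1 ≤ rk v k (k + 2) := fun hc => hw k ⟨h2.trans (huw _ _), hc.trans (hvw _ _)⟩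
  obtain ⟨z, hz, hz'⟩ := one_le_rk.1 hfill
  have hvv := invol_apply hv
  rw [two_le_rk]
  by_cases hzk : (z : ℕ) < k
  · have hvz : (v z : ℕ) = k + 1 := by
      by_contra hc
      exact hno (one_le_rk.2 ⟨z, by omega, by omega⟩)
    obtain ⟨t, ht, ht'⟩ := one_le_rk.1 hr
    have htz : t ≠ v z := by
      rintro rfl
      rw [hvv] at ht'; omega
    have htz' : (t : ℕ) ≠ v z := fun e => htz (Fin.ext e)
    refine ⟨z, t, ?_, by omega, by omega⟩
    rintro rfl; omega
  · obtain ⟨t, ht, ht'⟩ := one_le_rk.1 hl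
    have htz : v t ≠ z := by
      rintro rfl
      rw [hvv] at hz'; omega
    have htz' : (v t : ℕ) ≠ z := fun e => htz (Fin.ext e)
    refine ⟨z, t, ?_, by omega, by omega⟩
    rintro rfl; omega

/-! ### Cutting a good involution at a gap -/

/-- Sufficient conditions for `v` to be the result of cutting `w` at the gap before `L`: nothing
crosses this gap in `v`, every arc of `v` is contained in the arc of `w` with the same left end
(or, if it starts at `L`, possibly in one starting at a fixed `c < L`), and every other crossed
gap stays crossed. -/
lemma cut_aux {n : ℕ} {w v : Perm (Fin n)} (hw : IsInvolution w) (hv : IsInvolution v)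
    {L c : Fin n} (hc : c < L) (h1 : ∀ z < L, v z < L)
    (hD : ∀ z, z ≠ L → z < v z → v z ≤ w z) (hL : L < v L → v L ≤ w L ∨ v L ≤ w c)
    (hS : ∀ (l : ℕ) (z : Fin n), l ≠ L → (z : ℕ) < l → l ≤ w z →
      ∃ t : Fin n, (t : ℕ) < l ∧ l ≤ v t) :
    Dom v w ∧ supp v = (supp w).erase (L : ℕ) := by
  have hdom : Dom v w := by
    refine dom_of_upper hv hw fun p q hpq => ?_
    unfold rk
    apply Finset.card_le_card_of_injOn (fun z => if v z ≤ w z then z else c)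
    · intro z hz
      simp only [coe_filter, mem_univ, true_and, Set.mem_ofPred_eq] at hz ⊢
      have hzv : z < v z := by grind
      split_ifs with hzw
      · grind
      · have hzL : z = L := by
          by_contra hzL
          exact hzw (hD z hzL hzv)
        subst hzL
        have := hL hzv
        grind
    · intro z hz y hy hzy
      simp only [coe_filter, mem_univ, true_and, Set.mem_ofPred_eq] at hz hy hzy
      have := h1 c hc
      have hzv : z < v z := by grind
      have hyv : y < v y := by grind
      grind
  refine ⟨hdom, ?_⟩
  ext l
  rw [mem_erase]
  constructor
  · intro hl
    refine ⟨?_, hdom.supp_subset hl⟩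
    rintro rfl
    obtain ⟨x, hx, hx'⟩ := one_le_rk.1 (mem_supp.1 hl)
    have := h1 x hx
    omega
  · rintro ⟨hne, hl⟩
    obtain ⟨x, hxl, hlx⟩ := one_le_rk.1 (mem_supp.1 hl)
    exact mem_supp.2 (one_le_rk.2 (hS l x hne hxl hlx))

/-- A single gap can be removed from the support. With `K`, `L` the positions next to the gap:
if two arcs cross it, they are `(x, L)` and `(K, d)` and become `(x, K)` and `(L, d)`. A unique
crossing arc `(a, b)` is removed, and the arcs `(a, K)`, resp. `(L, b)`, are added if `K`,
resp. `L`, is a fixed point. -/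
lemma Good.cut {n : ℕ} {w : Perm (Fin n)} (hw : IsInvolution w) (hg : Good w) {p : ℕ}
    (hp : 1 ≤ rk w p p) :
    ∃ v, IsInvolution v ∧ Dom v w ∧ supp v = (supp w).erase p := by
  have hww := invol_apply hw
  obtain ⟨a, ha, ha'⟩ := one_le_rk.1 hp
  obtain ⟨L, rfl⟩ : ∃ L : Fin n, p = L := ⟨⟨p, by have := (w a).isLt; omega⟩, rfl⟩
  obtain ⟨K, hK⟩ : ∃ K : Fin n, (K : ℕ) + 1 = L :=
    ⟨⟨L - 1, by have := L.isLt; omega⟩, by simp only; omega⟩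
  by_cases h2 : 2 ≤ rk w L L
  · obtain ⟨x, y, hxy, hx, hx', hy, hy'⟩ :
        ∃ x y : Fin n, x < y ∧ (x : ℕ) < L ∧ (L : ℕ) ≤ w x ∧ (y : ℕ) < L ∧ (L : ℕ) ≤ w y := by
      obtain ⟨x, y, hne, hx, hy⟩ := two_le_rk.1 h2
      rcases lt_or_gt_of_ne hne with h | h
      · exact ⟨x, y, h, hx.1, hx.2, hy.1, hy.2⟩
      · exact ⟨y, x, h, hy.1, hy.2, hx.1, hx.2⟩
    have hlt : (w x : ℕ) < w y := hg.nonnesting hxy (Fin.lt_def.2 (by omega))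
    have hxy' : (x : ℕ) < y := hxy
    obtain rfl : y = K := by
      apply Fin.ext
      by_contra hc
      exact hg.elim (K : ℕ) (x := x) (y := y) (z := y) hxy.ne (by omega) (by omega) (by omega)
        (by omega) (by omega) (by omega)
    have hwx : w x = L := by
      apply Fin.ext
      by_contra hc
      exact hg.elim (y : ℕ) (x := x) (y := y) (z := x) hxy.ne (by omega) (by omega) (by omega)
        (by omega) (by omega) (by omega)
    have hwL : w L = x := by rw [← hwx, hww]
    have hs : ∀ z, swap y L z = if z = y then L else if z = L then y else z :=
      fun x => swap_apply_def y L x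
    have huniq : ∀ z : Fin n, z < L → L ≤ w z → z = x ∨ z = y := by
      intro z hz hz'
      by_contra hc
      push Not at hc
      have h3 := hg.rk_diag_le L
      refine absurd h3 (not_le.2 ?_)
      unfold rk
      rw [Finset.two_lt_card]
      exact ⟨x, by simp; omega, y, by simp; omega, z, by simp; omega, hxy.ne, hc.1.symm, hc.2.symm⟩
    have hv : IsInvolution (swap y L * w * swap y L) := by
      apply isInvolution_of
      intro z
      simp [hww]
    refine ⟨_, hv, cut_aux (c := y) hw hv (Fin.lt_def.2 hy) ?_ ?_ ?_ ?_⟩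
    · intro z hz
      simp only [Perm.mul_apply, hs]
      grind
    · intro z hz
      simp only [Perm.mul_apply, hs]
      grind
    · simp only [Perm.mul_apply, hs]
      grind
    · intro l z hl hz hz'
      simp only [Perm.mul_apply, hs]
      by_cases hzx : z = x
      · exact ⟨x, by grind⟩
      by_cases hzy : z = y
      · exact ⟨L, by grind⟩
      exact ⟨z, by grind⟩
  · have huniq : ∀ z : Fin n, z < L → L ≤ w z → z = a := by
      intro z hz hz'
      by_contra hc
      exact h2 (two_le_rk.2 ⟨z, a, hc, ⟨hz, hz'⟩, ha, ha'⟩)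
    obtain ⟨b, hb⟩ : ∃ b, w a = b := ⟨_, rfl⟩
    rw [hb] at ha'
    have hwb : w b = a := by rw [← hb, hww]
    -- Arcs of `w` ending at `K` or starting at `L` do not nest with `(a, b)`.
    have hKc : w K ≠ K → a ≠ K → w K < a := by
      intro hne hne'
      by_contra hcon
      have h3 : w K < L := by
        by_contra hc
        exact hne' (huniq K (by grind) (not_lt.1 hc)).symm
      have h4 : a ≠ w K := by
        rintro h; rw [h, hww] at hb; omega
      have h5 := hg.nonnesting (x := a) (y := w K) (by grind) (by rw [hww]; grind)
      rw [hww] at h5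
      grind
    have hLc : w L ≠ L → b ≠ L → b < w L := by
      intro hne hne'
      have h3 : L < w L := by
        by_contra hc
        have := huniq (w L) (by grind) (by rw [hww])
        rw [← this, hww] at hb
        exact hne' hb.symm
      have := hg.nonnesting (x := a) (y := L) ha h3
      rwa [hb] at this
    obtain ⟨F, hF⟩ : ∃ F : Fin n → Fin n, ∀ z, F z =
        if z = a then (if w K = K then K else a)
        else if z = K ∧ w K = K then a
        else if z = b then (if w L = L then L else b)
        else if z = L ∧ w L = L then b else w z := ⟨_, fun _ => rfl⟩
    have hFF : Function.Involutive F := by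
      intro z
      have haK : w K = K → a ≠ K ∧ b ≠ K := by grind
      have hbL : w L = L → a ≠ L ∧ b ≠ L := by grind
      have hwz := hww z
      have hwa : w z = a → z = b := by grind
      have hwb' : w z = b → z = a := by grind
      by_cases hKK : w K = K <;> by_cases hLL : w L = L <;>
        simp only [hKK, hLL, and_true, and_false, if_true, if_false] at hF <;> rw [hF z] <;>
        grind (splits := 15)
    have hv : IsInvolution (Function.Involutive.toPerm F hFF) := isInvolution_of hFF
    have hFv : ∀ z, Function.Involutive.toPerm F hFF z = F z := fun _ => rfl
    refine ⟨_, hv, cut_aux (c := a) hw hv (Fin.lt_def.2 ha) ?_ ?_ ?_ ?_⟩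
    · intro z hz
      rw [hFv, hF]
      grind
    · intro z hz
      rw [hFv, hF]
      grind
    · rw [hFv, hF]
      grind
    · intro l z hl hz hz'
      simp only [hFv]
      by_cases hza : z = a
      · subst hza
        rcases lt_or_gt_of_ne hl with hlL | hlL
        · by_cases hKK : w K = K
          · exact ⟨z, hz, by rw [hF]; grind⟩
          · have := hKc hKK (by grind)
            exact ⟨w K, by grind, by rw [hF]; grind⟩
        · by_cases hLL : w L = L
          · exact ⟨L, hlL, by rw [hF]; grind⟩
          · have := hLc hLL (by grind)
            exact ⟨L, hlL, by rw [hF]; grind⟩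
      · exact ⟨z, hz, by rw [hF]; grind⟩

lemma Good.exists_supp {n : ℕ} {w : Perm (Fin n)} (hw : IsInvolution w) (hg : Good w)
    (T : Finset ℕ) : ∃ v, IsInvolution v ∧ Dom v w ∧ supp v = supp w \ T := by
  induction T using Finset.induction_on with
  | empty => exact ⟨w, hw, Dom.refl w, by simp⟩
  | insert p T _ ih =>
    obtain ⟨v, hv, hvw, hs⟩ := ih
    rw [Finset.sdiff_insert, ← hs]
    by_cases hp : p ∈ supp v
    · obtain ⟨u, hu, huv, hsu⟩ := (hg.mono hvw).cut hv (mem_supp.1 hp)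
      exact ⟨u, hu, huv.trans hvw, hsu⟩
    · exact ⟨v, hv, hvw, (Finset.erase_eq_of_notMem hp).symm⟩

lemma Good.isBoolean {n : ℕ} {w : Perm (Fin n)} (hw : IsInvolution w) (hg : Good w) :
    IsBooleanInvolution w := by
  let e : {p // p ∈ supp w} ≃ Fin (supp w).card := (supp w).equivFin
  let g : {u : Perm (Fin n) // IsInvolution u ∧ BruhatLE u w} → Finset (Fin (supp w).card) :=
    fun u => univ.filter fun i => ((e.symm i : ℕ)) ∈ supp u.1
  have key : ∀ a b, BruhatLE a.1 b.1 ↔ g a ⊆ g b := by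
    intro a b
    rw [bruhatLE_iff]
    constructor
    · intro h i hi
      simp only [g, mem_filter, mem_univ, true_and] at hi ⊢
      exact h.supp_subset hi
    · intro h
      have haw := (bruhatLE_iff.1 a.2.2)
      refine dom_of_supp_subset a.2.1 b.2.1 hg haw (bruhatLE_iff.1 b.2.2) fun p hp => ?_
      have : e ⟨p, haw.supp_subset hp⟩ ∈ g b := h (by simp [g, hp])
      simpa [g] using this
  refine ⟨(supp w).card, Equiv.ofBijective g ⟨?_, ?_⟩, key⟩
  · intro a b hab
    exact Subtype.ext (Dom.antisymm (bruhatLE_iff.1 ((key a b).2 hab.subset))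
      (bruhatLE_iff.1 ((key b a).2 hab.symm.subset)))
  · intro S
    obtain ⟨v, hv, hvw, hs⟩ := hg.exists_supp hw
      ((univ.filter fun i => i ∉ S).image fun i => (e.symm i : ℕ))
    refine ⟨⟨v, hv, hvw.bruhatLE⟩, ?_⟩
    ext i
    simp only [g, hs, mem_filter, mem_univ, true_and, mem_sdiff, (e.symm i).2, mem_image,
      not_exists, not_and]
    constructor
    · intro h
      by_contra hc
      exact h i hc rfl
    · intro h j hj hij
      have := e.symm.injective (Subtype.ext hij)
      exact hj (this ▸ h)

/-! ### Boolean involutions are good -/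

lemma dom_one {n : ℕ} {w : Perm (Fin n)} (hw : IsInvolution w) : Dom 1 w := by
  refine dom_of_upper (isInvolution_of fun _ => rfl) hw fun p q hpq => ?_
  have : rk (1 : Perm (Fin n)) p q = 0 := by
    unfold rk
    rw [Finset.card_eq_zero, Finset.filter_eq_empty_iff]
    intro x _
    simp only [Perm.one_apply]
    omega
  omega

lemma dom_swap {n : ℕ} {w : Perm (Fin n)} (hw : IsInvolution w) {i j : Fin n} (hij : i < j)
    (h : 1 ≤ rk w (i + 1) j) : Dom (swap i j) w := by
  refine dom_of_upper (isInvolution_of fun x => swap_apply_self i j x) hw fun p q hpq => ?_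
  have hs : ∀ x, swap i j x = if x = i then j else if x = j then i else x :=
    fun x => swap_apply_def i j x
  by_cases h0 : rk (swap i j) p q = 0
  · omega
  obtain ⟨x, hx, hx'⟩ := one_le_rk.1 (Nat.one_le_iff_ne_zero.2 h0)
  have hxi : x = i ∧ (j : ℕ) ≥ q := by rw [hs] at hx'; grind
  calc rk (swap i j) p q ≤ ({i} : Finset (Fin n)).card := by
        unfold rk
        apply Finset.card_le_card
        intro y hy
        simp only [mem_filter, mem_univ, true_and, hs] at hy
        rw [mem_singleton]
        grind
    _ = 1 := by simp
    _ ≤ rk w p q := by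
      obtain ⟨z, hz, hz'⟩ := one_le_rk.1 h
      exact one_le_rk.2 ⟨z, by grind⟩

lemma exists_mem_supp {n : ℕ} {w : Perm (Fin n)} (hw : IsInvolution w) (hne : w ≠ 1) :
    ∃ p, p ∈ supp w := by
  obtain ⟨i, hi, hmin⟩ := exists_first_diff hne.symm
  have := (dom_one hw).first_diff hi hmin
  exact ⟨w i, mem_supp.2 (one_le_rk.2 ⟨i, this, le_rfl⟩)⟩

/-- In a Boolean ideal an element is the join of the atoms below it, and the atoms are the adjacent
transpositions; so the support determines the element. -/
lemma eq_of_supp_eq {n : ℕ} {w : Perm (Fin n)} (hb : IsBooleanInvolution w)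
    {u v : Perm (Fin n)} (hu : IsInvolution u) (hv : IsInvolution v) (huw : Dom u w)
    (hvw : Dom v w) (hs : supp u = supp v) : u = v := by
  obtain ⟨m, f, hf⟩ := hb
  simp only [bruhatLE_iff] at hf
  have key : ∀ (u v : Perm (Fin n)) (hu : IsInvolution u) (hv : IsInvolution v)
      (huw : BruhatLE u w) (hvw : BruhatLE v w), supp u = supp v → Dom u v := by
    intro u v hu hv huw hvw hs
    refine (hf ⟨u, hu, huw⟩ ⟨v, hv, hvw⟩).2 fun i hi => ?_
    obtain ⟨z, hz⟩ := f.surjective {i}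
    have hzu : Dom z.1 u := (hf z ⟨u, hu, huw⟩).2 (by rw [hz]; simpa using hi)
    have hz1 : z.1 ≠ 1 := by
      intro h1
      obtain ⟨e, he⟩ := f.surjective ∅
      have : f z ⊆ f e := (hf z e).1 (by rw [h1]; exact dom_one e.2.1)
      rw [hz, he] at this
      simp at this
    obtain ⟨p, hp⟩ := exists_mem_supp z.2.1 hz1
    have hp1 := mem_supp.1 hp
    obtain ⟨x, hx, hx'⟩ := one_le_rk.1 hp1
    -- The adjacent transposition at the gap `p` lies below `z`, hence equals the atom `z`.
    obtain ⟨j, rfl⟩ : ∃ j : Fin n, p = j := ⟨⟨p, by have := (z.1 x).isLt; omega⟩, rfl⟩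
    obtain ⟨k, hk⟩ : ∃ k : Fin n, (k : ℕ) + 1 = j :=
      ⟨⟨j - 1, by have := j.isLt; omega⟩, by simp only; omega⟩
    have hkj : k < j := Fin.lt_def.2 (by omega)
    have hsz : Dom (swap k j) z.1 := dom_swap z.2.1 hkj (by rw [hk]; exact hp1)
    have hsv : Dom (swap k j) v := by
      refine dom_swap hv hkj ?_
      rw [hk, ← mem_supp, ← hs]
      exact hzu.supp_subset hp
    have hsi : IsInvolution (swap k j) := isInvolution_of fun x => swap_apply_self k j x
    let s : {u : Perm (Fin n) // IsInvolution u ∧ BruhatLE u w} :=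
      ⟨swap k j, hsi, (hsv.trans (bruhatLE_iff.1 hvw)).bruhatLE⟩
    have h1 : f s ⊆ {i} := hz ▸ (hf s z).1 hsz
    have h2 : f s ⊆ f ⟨v, hv, hvw⟩ := (hf s _).1 hsv
    have h3 : f s ≠ ∅ := by
      intro h3
      have : Dom (swap k j) 1 :=
        (hf s ⟨1, isInvolution_of fun _ => rfl,
          ((dom_one hv).trans (bruhatLE_iff.1 hvw)).bruhatLE⟩).2 (by rw [h3]; simp)
      have := this.antisymm (dom_one hsi)
      exact hkj.ne ((swap_eq_one_iff).1 this)
    rcases Finset.subset_singleton_iff.1 h1 with h | h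
    · exact absurd h h3
    · exact h2 (by rw [h]; simp)
  exact (key u v hu hv huw.bruhatLE hvw.bruhatLE hs).antisymm
    (key v u hv hu hvw.bruhatLE huw.bruhatLE hs.symm)

/-- At a forbidden configuration, the ideal contains both the transposition exchanging the ends of
four consecutive positions and the copy of `3412` on them, which have the same support. -/
lemma good_of_boolean {n : ℕ} {w : Perm (Fin n)} (hw : IsInvolution w)
    (hb : IsBooleanInvolution w) : Good w := by
  rintro k ⟨h2, h1⟩
  obtain ⟨z, hz, hz'⟩ := one_le_rk.1 h1
  have hn := (w z).isLt
  obtain ⟨a, ha⟩ : ∃ a : Fin n, (a : ℕ) + 1 = k := ⟨⟨k - 1, by omega⟩, by simp only; omega⟩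
  obtain ⟨b, hb'⟩ : ∃ b : Fin n, (b : ℕ) = k := ⟨⟨k, by omega⟩, rfl⟩
  obtain ⟨c, hc⟩ : ∃ c : Fin n, (c : ℕ) = k + 1 := ⟨⟨k + 1, by omega⟩, rfl⟩
  obtain ⟨d, hd⟩ : ∃ d : Fin n, (d : ℕ) = k + 2 := ⟨⟨k + 2, by omega⟩, rfl⟩
  have hs : ∀ i j x : Fin n, swap i j x = if x = i then j else if x = j then i else x :=
    fun i j x => swap_apply_def i j x
  have hui : IsInvolution (swap a d) := isInvolution_of fun x => swap_apply_self a d x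
  have hud : Dom (swap a d) w :=
    dom_swap hw (Fin.lt_def.2 (by omega)) (by rw [ha, hd]; exact h1)
  have hv : ∀ x, (swap a c * swap b d) x =
      if x = a then c else if x = b then d else if x = c then a else if x = d then b else x := by
    intro x
    rw [Perm.mul_apply, hs, hs]
    grind
  have hvi : IsInvolution (swap a c * swap b d) := isInvolution_of fun x => by
    rw [hv, hv]
    grind (splits := 15)
  have hvd : Dom (swap a c * swap b d) w := by
    refine dom_of_upper hvi hw fun p q hpq => ?_
    have hab : ∀ x : Fin n, (x : ℕ) < p ∧ q ≤ ((swap a c * swap b d) x : ℕ) →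
        (x = a ∧ k ≤ p ∧ q ≤ k + 1) ∨ (x = b ∧ k + 1 ≤ p ∧ q ≤ k + 2) := by
      intro x hx
      rw [hv] at hx
      grind
    by_cases h0 : rk (swap a c * swap b d) p q = 0
    · omega
    obtain ⟨x, hx⟩ := one_le_rk.1 (Nat.one_le_iff_ne_zero.2 h0)
    have hx1 := hab x hx
    by_cases h3 : 2 ≤ rk (swap a c * swap b d) p q
    · obtain ⟨x, y, hxy, hx, hy⟩ := two_le_rk.1 h3
      have hx1 := hab x hx
      have hy1 := hab y hy
      have hp : p = k + 1 := by grind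
      have hq : q = k + 1 := by grind
      have hpq' : rk w p q = rk w (k + 1) (k + 1) := by rw [hp, hq]
      rw [hpq']
      refine le_trans ?_ h2
      refine (Finset.card_le_card (t := {a, b}) ?_).trans Finset.card_le_two
      intro t ht
      have := hab t (mem_filter.1 ht).2
      rw [mem_insert, mem_singleton]
      grind
    · have : 1 ≤ rk w p q := one_le_rk.2 ⟨z, by grind⟩
      omega
  have heq : swap a d = swap a c * swap b d := by
    refine eq_of_supp_eq hb hui hvi hud hvd ?_
    ext p
    rw [mem_supp, mem_supp, one_le_rk, one_le_rk]
    simp only [hv, hs]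
    constructor
    · rintro ⟨x, hx⟩
      by_cases hp : p ≤ k + 1
      · exact ⟨a, by grind⟩
      · exact ⟨b, by grind⟩
    · rintro ⟨x, hx⟩
      exact ⟨a, by grind⟩
  have := congrArg (fun π : Perm (Fin n) => π a) heq
  simp only [hv, hs] at this
  grind

/-! ### Paths -/

/-- The height of `ψ(w)` after `k` steps is the number of arcs crossing the gap there: arcs inside
the first `k` positions contribute `0`. -/
lemma sum_motzkinStep {n : ℕ} {w : Perm (Fin n)} (hw : IsInvolution w) (k : ℕ) :
    ∑ j ∈ univ.filter (fun j : Fin n => (j : ℕ) < k), motzkinStep w j = rk w k k := by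
  have hww := invol_apply hw
  rw [← Finset.sum_filter_add_sum_filter_not _ (fun j => k ≤ (w j : ℕ))]
  rw [Finset.filter_filter, Finset.filter_filter]
  have h1 : ∑ j ∈ univ.filter (fun j : Fin n => (j : ℕ) < k ∧ k ≤ (w j : ℕ)), motzkinStep w j =
      rk w k k := by
    unfold rk
    rw [Finset.card_eq_sum_ones, Nat.cast_sum]
    refine Finset.sum_congr rfl fun j hj => ?_
    simp only [mem_filter, mem_univ, true_and] at hj
    unfold motzkinStep
    rw [if_neg, if_pos]
    · simp
    · exact Fin.lt_def.2 (by omega)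
    · intro h; rw [h] at hj; omega
  have h2 : ∑ j ∈ univ.filter (fun j : Fin n => (j : ℕ) < k ∧ ¬ k ≤ (w j : ℕ)),
      motzkinStep w j = 0 := by
    apply Finset.sum_involution (fun j _ => w j)
    · intro j _
      unfold motzkinStep
      rw [hww]
      grind
    · intro j _ hj h
      apply hj
      simp [motzkinStep, h]
    · intro j hj
      simp only [mem_filter, mem_univ, true_and] at hj ⊢
      rw [hww]; omega
    · intro j _; exact hww j
  rw [h1, h2, add_zero]

lemma isMotzkinSteps {n : ℕ} {w : Perm (Fin n)} (hw : IsInvolution w) :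
    IsMotzkinSteps (motzkinStep w) := by
  refine ⟨fun k => by unfold motzkinStep; grind, fun k => ?_, ?_⟩
  · rw [sum_motzkinStep hw]; positivity
  · have h := sum_motzkinStep hw n
    rw [Finset.filter_true_of_mem (fun j _ => j.isLt)] at h
    rw [h]
    have : ¬ 1 ≤ rk w n n := by
      rw [one_le_rk]
      rintro ⟨x, -, hx⟩
      have := (w x).isLt
      omega
    omega

lemma Good.isRestricted {n : ℕ} {w : Perm (Fin n)} (hw : IsInvolution w) (hg : Good w) :
    IsRestrictedMotzkinSteps (motzkinStep w) := by
  refine ⟨isMotzkinSteps hw, fun k => ?_, fun k hk => ?_⟩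
  · rw [sum_motzkinStep hw]
    exact_mod_cast hg.rk_diag_le k
  · rw [sum_motzkinStep hw]
    have hfix : w k = k := by
      unfold motzkinStep at hk; grind
    by_contra hcon
    have h2 : 2 ≤ rk w k k := by omega
    obtain ⟨x, y, hne, hx, hy⟩ := two_le_rk.1 h2
    have hx' : w x ≠ k := fun h => by
      rw [← hfix] at h; have := w.injective h; omega
    have hy' : w y ≠ k := fun h => by
      rw [← hfix] at h; have := w.injective h; omega
    have hx'' : (w x : ℕ) ≠ k := fun h => hx' (Fin.ext h)
    have hy'' : (w y : ℕ) ≠ k := fun h => hy' (Fin.ext h)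
    exact hne (hg.cover k hx.1 (by omega) hy.1 (by omega))

/-- If the path is restricted and no arcs nest, each position lies strictly below at most one arc.
So if two arcs cross a gap and one covers both adjacent positions, the other one joins these
positions, which is a nesting. -/
lemma good_of_restricted {n : ℕ} {w : Perm (Fin n)} (hw : IsInvolution w)
    (hn : ∀ x y, x < y → y < w y → w x < w y) (hr : IsRestrictedMotzkinSteps (motzkinStep w)) :
    Good w := by
  have hww := invol_apply hw
  obtain ⟨-, h2, hflat⟩ := hr
  simp only [sum_motzkinStep hw] at h2 hflat
  have hcov : ∀ z x y : Fin n, x < z → z < w x → y < z → z < w y → x = y := by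
    intro z x y hx hx' hy hy'
    by_contra hne
    have h2z : 2 ≤ rk w z z := two_le_rk.2 ⟨x, y, hne, by grind, by grind⟩
    rcases lt_trichotomy (w z) z with h | h | h
    · -- A downstep from height at least `3`.
      have h3 : 2 < rk w z z := by
        unfold rk
        rw [Finset.two_lt_card]
        refine ⟨x, by simp; grind, y, by simp; grind, w z, by simp [hww]; grind, hne, ?_, ?_⟩
        · rintro rfl; rw [hww] at hx'; grind
        · rintro rfl; rw [hww] at hy'; grind
      have := h2 z
      omega
    · have := hflat z (by simp [motzkinStep, h])
      omega
    · -- An upstep to height at least `3`.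
      have h3 : 2 < rk w (z + 1) (z + 1) := by
        unfold rk
        rw [Finset.two_lt_card]
        exact ⟨x, by simp; grind, y, by simp; grind, z, by simp; grind, hne, hx.ne, hy.ne⟩
      have := h2 (z + 1)
      omega
  rintro k ⟨h2', h1⟩
  obtain ⟨t, ht, ht'⟩ := one_le_rk.1 h1
  obtain ⟨x, hxt, hx, hx'⟩ : ∃ x : Fin n, x ≠ t ∧ (x : ℕ) < k + 1 ∧ k + 1 ≤ (w x : ℕ) := by
    obtain ⟨x, y, hne, hx, hy⟩ := two_le_rk.1 h2'
    by_cases h : x = t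
    · exact ⟨y, by rw [← h]; exact hne.symm, hy⟩
    · exact ⟨x, h, hx⟩
  have hlt := (w t).isLt
  have e1 := hcov ⟨k, by omega⟩ x t
  have e2 := hcov ⟨k + 1, by omega⟩ x t
  have e3 := hn t x
  simp only [Fin.lt_def] at e1 e2 e3
  by_cases c1 : (x : ℕ) < k
  · exact hxt (e1 c1 (by omega) ht (by omega))
  by_cases c2 : k + 1 < (w x : ℕ)
  · exact hxt (e2 (by omega) c2 (by omega) (by omega))
  have := e3 (by omega) (by omega)
  omega

/-- Without nestings the partner of each downstep is forced by the earlier steps. -/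
lemma Good.eq_of_step_eq {n : ℕ} {u w : Perm (Fin n)} (hu : IsInvolution u)
    (hw : IsInvolution w) (hgu : Good u) (hgw : Good w) (h : motzkinStep u = motzkinStep w) :
    u = w := by
  have key : ∀ u w : Perm (Fin n), IsInvolution u → IsInvolution w → Good w →
      motzkinStep u = motzkinStep w → ∀ i, (∀ x < i, u x = w x) → ¬ u i < w i := by
    intro u w hu hw hgw h i hmin hlt
    have huu := invol_apply hu
    have hww := invol_apply hw
    have hst : ∀ x, (u x = x ↔ w x = x) ∧ (x < u x ↔ x < w x) := by
      intro x
      have := congrFun h x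
      unfold motzkinStep at this
      grind
    rcases lt_trichotomy (u i) i with hi | hi | hi
    · have := hmin _ hi
      rw [huu] at this
      have h2 := hww (u i)
      rw [← this] at h2
      exact hlt.ne h2.symm
    · have := (hst i).1.1 hi
      grind
    · obtain ⟨y, hy⟩ : ∃ y, w (u i) = y := ⟨_, rfl⟩
      have hwy : w y = u i := by rw [← hy, hww]
      have hyc : y < u i := by
        have h1 := hst (u i)
        rw [huu, hy] at h1
        grind
      rcases lt_trichotomy y i with h1 | h1 | h1
      · have := hmin y h1
        rw [hwy] at this
        exact h1.ne (u.injective this)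
      · rw [h1] at hwy; exact hlt.ne hwy.symm
      · have := hgw.nonnesting h1 (by rw [hwy]; exact hyc)
        rw [hwy] at this
        exact lt_asymm this hlt
  by_contra hne
  obtain ⟨i, hi, hmin⟩ := exists_first_diff hne
  rcases lt_or_gt_of_ne hi with hlt | hlt
  · exact key u w hu hw hgw h i hmin hlt
  · exact key w u hw hu hgu h.symm i (fun x hx => (hmin x hx).symm) hlt

lemma sum_steps {n : ℕ} {st : Fin n → ℤ} (h : ∀ k, st k = 1 ∨ st k = 0 ∨ st k = -1)
    (A : Finset (Fin n)) : ∑ j ∈ A, st j =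
      ((A.filter fun j => st j = 1).card : ℤ) - (A.filter fun j => st j = -1).card := by
  rw [← Finset.sum_boole, ← Finset.sum_boole, ← Finset.sum_sub_distrib]
  refine Finset.sum_congr rfl fun j _ => ?_
  rcases h j with h | h | h <;> simp [h]

/-- Every Motzkin path comes from an involution without nestings, matching the `i`-th upstep with
the `i`-th downstep. -/
lemma exists_nonnesting {n : ℕ} {st : Fin n → ℤ} (hst : IsMotzkinSteps st) :
    ∃ w : Perm (Fin n), IsInvolution w ∧ motzkinStep w = st ∧
      ∀ x y, x < y → y < w y → w x < w y := by
  obtain ⟨h, hpos, h0⟩ := hst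
  obtain ⟨U, hU⟩ : ∃ U : Finset (Fin n), ∀ x, x ∈ U ↔ st x = 1 :=
    ⟨univ.filter fun x => st x = 1, by simp⟩
  obtain ⟨D, hD⟩ : ∃ D : Finset (Fin n), ∀ x, x ∈ D ↔ st x = -1 :=
    ⟨univ.filter fun x => st x = -1, by simp⟩
  have hcard : D.card = U.card := by
    have h1 := sum_steps h univ
    rw [h0] at h1
    have e1 : (univ.filter fun x => st x = 1) = U := by ext x; simp [hU]
    have e2 : (univ.filter fun x => st x = -1) = D := by ext x; simp [hD]
    rw [e1, e2] at h1
    omega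
  let e : U ≃o D := (U.orderIsoOfFin rfl).symm.trans (D.orderIsoOfFin hcard)
  have hdisj : ∀ x, x ∈ U → x ∉ D := by
    intro x hx hx'
    rw [hU] at hx; rw [hD] at hx'; omega
  -- Otherwise the downsteps up to `e x` would outnumber the upsteps.
  have hup : ∀ x : U, (x : Fin n) < e x := by
    intro x
    by_contra hcon
    have hne : (x : Fin n) ≠ e x := fun hc => hdisj x x.2 (hc ▸ (e x).2)
    have hlt : (e x : Fin n) < x := lt_of_le_of_ne (not_lt.1 hcon) hne.symm
    have hk := hpos ((e x : Fin n) + 1)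
    rw [sum_steps h, Finset.filter_filter, Finset.filter_filter] at hk
    have hmem : (e x : Fin n) ∈ univ.filter
        (fun j : Fin n => (j : ℕ) < ((e x : Fin n) : ℕ) + 1 ∧ st j = -1) := by
      simp [← hD]
    have hc := Finset.card_erase_add_one hmem
    have hle : (univ.filter (fun j : Fin n => (j : ℕ) < ((e x : Fin n) : ℕ) + 1 ∧ st j = 1)).card ≤
        ((univ.filter (fun j : Fin n => (j : ℕ) < ((e x : Fin n) : ℕ) + 1 ∧ st j = -1)).erase
          (e x)).card := by
      apply Finset.card_le_card_of_injOn
        (fun u => if hu : u ∈ U then (e ⟨u, hu⟩ : Fin n) else u)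
      · intro u hu
        simp only [coe_filter, mem_univ, true_and, Set.mem_ofPred_eq, ← hU] at hu
        have hlt' : e ⟨u, hu.2⟩ < e x := by
          rw [e.lt_iff_lt, ← Subtype.coe_lt_coe]
          change u < (x : Fin n)
          exact Fin.lt_def.2 (by have : ((e x : Fin n) : ℕ) < (x : Fin n) := hlt; omega)
        have hlt'' : (e ⟨u, hu.2⟩ : Fin n) < e x := hlt'
        have hd : st (e ⟨u, hu.2⟩ : Fin n) = -1 := (hD _).1 (e ⟨u, hu.2⟩).2
        rw [mem_coe, mem_erase, mem_filter]
        simp only [dif_pos hu.2, hd, mem_univ, and_true, true_and]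
        refine ⟨hlt''.ne, ?_⟩
        have : ((e ⟨u, hu.2⟩ : Fin n) : ℕ) < (e x : Fin n) := hlt''
        omega
      · intro u hu v hv huv
        simp only [coe_filter, mem_univ, true_and, Set.mem_ofPred_eq, ← hU] at hu hv
        simp only [dif_pos hu.2, dif_pos hv.2] at huv
        have := e.injective (Subtype.ext huv)
        simpa using this
    omega
  let F : Fin n → Fin n := fun z => if hz : z ∈ U then (e ⟨z, hz⟩ : Fin n) else
    if hz : z ∈ D then (e.symm ⟨z, hz⟩ : Fin n) else z
  have hFU : ∀ z (hz : z ∈ U), F z = e ⟨z, hz⟩ := fun z hz => dif_pos hz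
  have hFD : ∀ z (hz : z ∈ D), F z = e.symm ⟨z, hz⟩ := fun z hz => by
    simp only [F, dif_neg (fun hu => hdisj z hu hz), dif_pos hz]
  have hFN : ∀ z, z ∉ U → z ∉ D → F z = z := fun z hu hd => by
    simp only [F, dif_neg hu, dif_neg hd]
  have hdown : ∀ z (hz : z ∈ D), F z < z := fun z hz => by
    have := hup (e.symm ⟨z, hz⟩)
    rw [e.apply_symm_apply] at this
    rwa [hFD z hz]
  have hFF : Function.Involutive F := by
    intro z
    by_cases hu : z ∈ U
    · rw [hFU z hu, hFD _ (e ⟨z, hu⟩).2]; simp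
    by_cases hd : z ∈ D
    · rw [hFD z hd, hFU _ (e.symm ⟨z, hd⟩).2]; simp
    · rw [hFN z hu hd, hFN z hu hd]
  refine ⟨Function.Involutive.toPerm F hFF, isInvolution_of hFF, ?_, ?_⟩
  · funext z
    change (if F z = z then (0 : ℤ) else if z < F z then 1 else -1) = st z
    by_cases hu : z ∈ U
    · have := hup ⟨z, hu⟩
      rw [hFU z hu, if_neg this.ne', if_pos this, (hU z).1 hu]
    by_cases hd : z ∈ D
    · have := hdown z hd
      rw [if_neg this.ne, if_neg (lt_asymm this), (hD z).1 hd]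
    · rw [if_pos (hFN z hu hd)]
      rw [hU] at hu
      rw [hD] at hd
      have := h z
      omega
  · intro x y hxy hy
    change F x < F y
    change y < F y at hy
    have hyU : y ∈ U := by
      by_contra hu
      by_cases hd : y ∈ D
      · exact lt_asymm hy (hdown y hd)
      · rw [hFN y hu hd] at hy; exact lt_irrefl _ hy
    by_cases hu : x ∈ U
    · rw [hFU x hu, hFU y hyU, Subtype.coe_lt_coe, e.lt_iff_lt]
      exact hxy
    by_cases hd : x ∈ D
    · exact (hdown x hd).trans (hxy.trans hy)
    · rw [hFN x hu hd]; exact hxy.trans hy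

end MotzkinBijection

/-- For every involution `w ∈ I(Sₙ)`, the path `ψ(w)` is a Motzkin path of length
`n`; moreover, `ψ` restricted to the set of Boolean involutions in `I(Sₙ)` is a
bijection onto the set of restricted Motzkin paths of length `n`. -/
theorem motzkin_bijection {n : ℕ} :
    (∀ w : Equiv.Perm (Fin n), IsInvolution w → IsMotzkinSteps (motzkinStep w)) ∧
    Set.BijOn (fun w : Equiv.Perm (Fin n) => motzkinStep w)
      {w : Equiv.Perm (Fin n) | IsInvolution w ∧ IsBooleanInvolution w}
      {st : Fin n → ℤ | IsRestrictedMotzkinSteps st} := by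
  refine ⟨fun w hw => MotzkinBijection.isMotzkinSteps hw, ?_, ?_, ?_⟩
  · rintro w ⟨hw, hb⟩
    exact (MotzkinBijection.good_of_boolean hw hb).isRestricted hw
  · rintro u ⟨hu, hbu⟩ w ⟨hw, hbw⟩ h
    exact (MotzkinBijection.good_of_boolean hu hbu).eq_of_step_eq hu hw
      (MotzkinBijection.good_of_boolean hw hbw) h
  · rintro st hst
    obtain ⟨w, hw, rfl, hn⟩ := MotzkinBijection.exists_nonnesting hst.1
    exact ⟨w, ⟨hw, (MotzkinBijection.good_of_restricted hw hn hst).isBoolean hw⟩, rfl⟩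
end

section
/- Let w ∈ I(S_n) be a Boolean involution and let α(w) be the number of indices i ∈ [n] such that the path ψ(w) passes through the point (i,0), equivalently the number of i ∈ [n] with w(j) ≤ i for all j ≤ i. Then the rank of w satisfies ρ(w) = n − α(w); that is, (inv(w) + exc(w))/2 = n − α(w). -/
/-! ### The Bruhat order and initial segments -/

/-- One step upwards in the Bruhat order: right multiplication by a transposition that
increases the number of inversions. -/
def BruhatStep {n : ℕ} (u v : Equiv.Perm (Fin n)) : Prop :=
  ∃ t, IsTransposition t ∧ v = u * t ∧ invCount u < invCount v

/-- `w` maps the initial segment `{0, …, i}` into itself. -/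
def Pres {n : ℕ} (w : Equiv.Perm (Fin n)) (i : Fin n) : Prop := ∀ j, j ≤ i → w j ≤ i

open Classical in
/-- The set of `i` for which `w` does not preserve the initial segment `{0, …, i}`. -/
noncomputable def supp {n : ℕ} (w : Equiv.Perm (Fin n)) : Finset (Fin n) :=
  Finset.univ.filter fun i => ¬ Pres w i

lemma bruhatLE_iff {n : ℕ} (u w : Equiv.Perm (Fin n)) :
    BruhatLE u w ↔ Relation.ReflTransGen BruhatStep u w := by
  constructor
  · rintro ⟨ts, h1, h2, h3⟩
    induction ts generalizing u with
    | nil => simp at h2; subst h2; exact .refl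
    | cons t ts ih =>
      refine Relation.ReflTransGen.head (b := u * t) ⟨t, h1 t (by simp), rfl, ?_⟩ ?_
      · simpa using h3 0 (by simp)
      · refine ih (u * t) (fun s hs => h1 s (by simp [hs])) (by simpa using h2) fun k hk => ?_
        simpa using h3 (k + 1) (by simpa using hk)
  · intro h
    induction h using Relation.ReflTransGen.head_induction_on with
    | refl => exact ⟨[], by simp, by simp, by simp⟩
    | @head a b hab _ ih =>
      obtain ⟨t, ht, rfl, hlt⟩ := hab
      obtain ⟨ts, h1, h2, h3⟩ := ih
      refine ⟨t :: ts, by simpa using ⟨ht, h1⟩, by simpa using h2, fun k hk => ?_⟩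
      cases k with
      | zero => simpa using hlt
      | succ k => simpa using h3 k (by simpa using hk)

lemma BruhatLE.trans {n : ℕ} {u v w : Equiv.Perm (Fin n)} (h : BruhatLE u v)
    (h' : BruhatLE v w) : BruhatLE u w := by
  rw [bruhatLE_iff] at *
  exact Relation.ReflTransGen.trans h h'

lemma BruhatLE.refl {n : ℕ} (u : Equiv.Perm (Fin n)) : BruhatLE u u := by
  rw [bruhatLE_iff]

/-- Sending an inversion `(p, q)` of `v * swap a b` to its image under the swap where that is
increasing, and to itself otherwise, gives an injection into the inversions of `v`. -/
lemma invCount_mul_swap_le {n : ℕ} (v : Equiv.Perm (Fin n)) {a b : Fin n} (hab : a < b)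
    (hv : v b < v a) : invCount (v * Equiv.swap a b) ≤ invCount v := by
  unfold invCount
  set t := Equiv.swap a b with ht
  have tt : ∀ x, t (t x) = x := fun x => Equiv.swap_apply_self a b x
  refine Finset.card_le_card_of_injOn
    (fun p => if t p.1 < t p.2 then (t p.1, t p.2) else p) ?_ ?_
  · rintro ⟨p, q⟩ hp
    simp only [Finset.mem_coe, Finset.mem_filter, Finset.mem_univ, true_and] at hp ⊢
    simp only [Equiv.Perm.mul_apply] at hp
    obtain ⟨hpq, hlt⟩ := hp
    split_ifs with h
    · exact ⟨h, hlt⟩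
    · refine ⟨hpq, ?_⟩
      simp only [ht, Equiv.swap_apply_def] at h hlt
      grind
  · rintro ⟨p, q⟩ hp ⟨p', q'⟩ hp' he
    simp only [Finset.mem_coe, Finset.mem_filter, Finset.mem_univ, true_and] at hp hp' he
    grind

lemma Pres.of_step {n : ℕ} {u v : Equiv.Perm (Fin n)} (h : BruhatStep u v) {i : Fin n}
    (hv : Pres v i) : Pres u i := by
  obtain ⟨t, ⟨a, b, hab, rfl⟩, rfl, hlt⟩ := h
  wlog hlt' : a < b generalizing a b
  · rw [Equiv.swap_comm] at hv hlt
    exact this b a hab.symm hv hlt (by omega)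
  have h1 : u a < u b := by
    by_contra hc
    have hne : u a ≠ u b := u.injective.ne hab
    have := invCount_mul_swap_le u hlt' (by omega)
    omega
  intro j hj
  have ha := hv a
  have hb := hv b
  have hh := hv j hj
  simp only [Equiv.Perm.mul_apply, Equiv.swap_apply_left, Equiv.swap_apply_right] at ha hb hh
  by_cases hja : j = a
  · subst hja; have := ha hj; omega
  by_cases hjb : j = b
  · subst hjb; exact ha (by omega)
  rwa [Equiv.swap_apply_of_ne_of_ne hja hjb] at hh

lemma Pres.of_le {n : ℕ} {u v : Equiv.Perm (Fin n)} (h : BruhatLE u v) {i : Fin n}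
    (hv : Pres v i) : Pres u i := by
  rw [bruhatLE_iff] at h
  induction h with
  | refl => exact hv
  | tail _ h ih => exact ih (hv.of_step h)

/-! ### Descents and coverings of involutions -/

lemma invCount_inv {n : ℕ} (v : Equiv.Perm (Fin n)) : invCount v⁻¹ = invCount v := by
  unfold invCount
  refine Finset.card_bij' (fun p _ => (v⁻¹ p.2, v⁻¹ p.1)) (fun p _ => (v p.2, v p.1)) ?_ ?_ ?_ ?_
  all_goals simp
  · exact fun a b h1 h2 => ⟨h2, h1⟩
  · exact fun a b h1 h2 => ⟨h2, h1⟩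

/-- Removing a descent at adjacent positions removes exactly one inversion. -/
lemma invCount_mul_adj {n : ℕ} (v : Equiv.Perm (Fin n)) {a b : Fin n} (hab : (b : ℕ) = a + 1)
    (hv : v b < v a) : invCount (v * Equiv.swap a b) + 1 = invCount v := by
  unfold invCount
  set t := Equiv.swap a b with ht
  have tt : ∀ x, t (t x) = x := fun x => Equiv.swap_apply_self a b x
  have hmem : (a, b) ∈ Finset.univ.filter
      fun p : Fin n × Fin n => p.1 < p.2 ∧ v p.2 < v p.1 := by
    simp only [Finset.mem_filter, Finset.mem_univ, true_and]
    exact ⟨by omega, hv⟩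
  rw [← Finset.card_erase_add_one hmem]
  congr 1
  refine Finset.card_bij' (fun p _ => (t p.1, t p.2)) (fun p _ => (t p.1, t p.2)) ?_ ?_ ?_ ?_
  · rintro ⟨p, q⟩ hp
    simp only [Finset.mem_filter, Finset.mem_univ, true_and,
      Finset.mem_erase, ne_eq, Prod.mk.injEq] at hp ⊢
    simp only [Equiv.Perm.mul_apply] at hp
    have hp2 := hp.2
    refine ⟨?_, ?_, hp2⟩ <;> simp only [ht, Equiv.swap_apply_def] at hp ⊢ <;> grind
  · rintro ⟨p, q⟩ hp
    simp only [Finset.mem_filter, Finset.mem_univ, true_and,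
      Finset.mem_erase, ne_eq, Prod.mk.injEq] at hp ⊢
    simp only [Equiv.Perm.mul_apply, tt]
    refine ⟨?_, hp.2.2⟩
    simp only [ht, Equiv.swap_apply_def] at hp ⊢; grind
  · simp [tt]
  · simp [tt]

lemma exists_descent {n : ℕ} {u : Equiv.Perm (Fin n)} (hu : u ≠ 1) :
    ∃ a b : Fin n, (b : ℕ) = a + 1 ∧ u b < u a := by
  by_contra! h
  apply hu
  have hm : StrictMono u := by
    cases n with
    | zero => exact fun a => a.elim0
    | succ n =>
      refine Fin.strictMono_iff_lt_succ.2 fun i => ?_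
      refine lt_of_le_of_ne (h i.castSucc i.succ (by simp)) (u.injective.ne ?_)
      exact (Fin.castSucc_lt_succ).ne
  ext x
  have h1 : (hm.orderIsoOfSurjective u u.surjective) = OrderIso.refl _ := Subsingleton.elim _ _
  have := congrArg (fun e => ((e x : Fin n) : ℕ)) h1
  simpa using this

/-- The transposition `(a a+1)` preserves every initial segment `{0, …, j}` with `j ≠ a`. -/
lemma swap_adj_pres {n : ℕ} {a b : Fin n} (hab : (b : ℕ) = a + 1) {j : Fin n} (hj : j ≠ a)
    (x : Fin n) : Equiv.swap a b x ≤ j ↔ x ≤ j := by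
  simp only [Equiv.swap_apply_def]
  grind

/-- Every nonidentity involution `u` covers an involution obtained by removing a descent `s`:
either `u * s`, if `s` and `u` commute, or `s * u * s`. Twice the rank drops by exactly two, and
the support loses at most one element. -/
lemma exists_cover {n : ℕ} {u : Equiv.Perm (Fin n)} (hi : IsInvolution u) (hu : u ≠ 1) :
    ∃ (a b : Fin n) (u' : Equiv.Perm (Fin n)), (b : ℕ) = a + 1 ∧ IsInvolution u' ∧
      BruhatLE u' u ∧ invCount u' < invCount u ∧
      invCount u + excCount u = invCount u' + excCount u' + 2 ∧
      (∀ j, j ≠ a → Pres u' j → Pres u j) ∧ (u' = 1 → u = Equiv.swap a b) := by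
  obtain ⟨a, b, hab, hd⟩ := exists_descent hu
  have hne : a ≠ b := by grind
  have huu : ∀ x, u (u x) = x := fun x => by
    simpa using congrArg (fun e : Equiv.Perm (Fin n) => e x) hi
  set s := Equiv.swap a b with hs
  have ss : s * s = 1 := Equiv.swap_mul_self a b
  have ssx : ∀ x, s (s x) = x := fun x => Equiv.swap_apply_self a b x
  have hst : IsTransposition s := ⟨a, b, hne, rfl⟩
  have h1 := invCount_mul_adj u hab hd
  rw [← hs] at h1
  have step1 : BruhatStep (u * s) u := ⟨s, hst, by rw [mul_assoc, ss, mul_one], by omega⟩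
  by_cases hc : u a = b
  · -- `u` exchanges `a` and `b`, so that `u * s` fixes both
    have hcb : u b = a := by rw [← hc, huu]
    refine ⟨a, b, u * s, hab, ?_, ?_, by omega, ?_, ?_, ?_⟩
    · ext x
      simp only [Equiv.Perm.mul_apply, Equiv.Perm.one_apply, hs, Equiv.swap_apply_def]
      grind
    · exact (bruhatLE_iff _ _).2 (.single step1)
    · have : excCount u = excCount (u * s) + 1 := by
        unfold excCount
        have hmem : a ∈ Finset.univ.filter fun i : Fin n => i < u i := by
          simp only [Finset.mem_filter, Finset.mem_univ, true_and]
          grind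
        rw [← Finset.card_erase_add_one hmem]
        congr 2
        ext x
        simp only [Finset.mem_filter, Finset.mem_univ, true_and, Finset.mem_erase,
          Equiv.Perm.mul_apply, hs, Equiv.swap_apply_def]
        grind
      omega
    · intro j hj hp x hx
      have := hp (s x) ((swap_adj_pres hab hj x).2 hx)
      simpa [ssx] using this
    · intro h
      have : u * s * s = s := by rw [h, one_mul]
      rwa [mul_assoc, ss, mul_one] at this
  · have hcb : u b ≠ a := fun h => hc (by rw [← h, huu])
    have husu : (u * s)⁻¹ = s * u := by
      rw [mul_inv_rev, hs, Equiv.swap_inv, inv_eq_of_mul_eq_one_left hi]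
    have h2 : invCount (s * u * s) + 1 = invCount (s * u) := by
      refine invCount_mul_adj (s * u) hab ?_
      simp only [Equiv.Perm.mul_apply, hs, Equiv.swap_apply_def]
      grind
    have h3 : invCount (s * u) = invCount (u * s) := by rw [← husu, invCount_inv]
    -- left multiplication of `u * s` by `s` is right multiplication by a conjugate of `s`
    have step2 : BruhatStep (s * u * s) (u * s) := by
      refine ⟨(s * u * s)⁻¹ * (u * s), ?_, (mul_inv_cancel_left _ _).symm, by omega⟩
      refine ⟨(u * s)⁻¹ a, (u * s)⁻¹ b, fun h => hne ((u * s)⁻¹.injective h), ?_⟩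
      have hsi : s⁻¹ = s := Equiv.swap_inv a b
      have := Equiv.mul_swap_eq_swap_mul (u * s)⁻¹ a b
      rw [← hs] at this
      have e : (s * u * s)⁻¹ * (u * s) = (u * s)⁻¹ * s * (u * s) := by
        rw [mul_assoc s u s, mul_inv_rev s, hsi]
      rw [e, this, mul_assoc, inv_mul_cancel, mul_one]
    refine ⟨a, b, s * u * s, hab, ?_, ?_, by omega, ?_, ?_, ?_⟩
    · ext x
      simp [ssx, huu]
    · exact (bruhatLE_iff _ _).2 (.head step2 (.single step1))
    · have : excCount u = excCount (s * u * s) := by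
        unfold excCount
        refine Finset.card_bij' (fun x _ => s x) (fun x _ => s x) ?_ ?_ ?_ ?_
        · intro x hx
          simp only [Finset.mem_filter, Finset.mem_univ, true_and] at hx ⊢
          simp only [Equiv.Perm.mul_apply, ssx]
          simp only [hs, Equiv.swap_apply_def]
          grind
        · intro x hx
          simp only [Finset.mem_filter, Finset.mem_univ, true_and] at hx ⊢
          simp only [Equiv.Perm.mul_apply] at hx
          generalize hy : s x = y at hx ⊢
          obtain rfl : x = s y := by rw [← hy, ssx]
          simp only [hs, Equiv.swap_apply_def] at hx
          grind
        · simp [ssx]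
        · simp [ssx]
      omega
    · intro j hj hp x hx
      have := hp (s x) ((swap_adj_pres hab hj x).2 hx)
      simp only [Equiv.Perm.mul_apply, ssx] at this
      exact (swap_adj_pres hab hj _).1 this
    · intro h
      have : s * (s * u * s) * s = 1 := by rw [h, mul_one, ss]
      rw [mul_assoc s u, ← mul_assoc s s, ss, one_mul, mul_assoc, ss, mul_one] at this
      exact absurd this hu

/-! ### Comparing rank and support -/

lemma isInvolution_one {n : ℕ} : IsInvolution (1 : Equiv.Perm (Fin n)) := mul_one 1

lemma one_bruhatLE {n : ℕ} {u : Equiv.Perm (Fin n)} (hi : IsInvolution u) : BruhatLE 1 u := by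
  induction h : invCount u using Nat.strong_induction_on generalizing u with
  | _ k ih =>
    by_cases hu : u = 1
    · rw [hu]; exact .refl 1
    · obtain ⟨a, b, u', -, hi', hle, hlt, -⟩ := exists_cover hi hu
      exact (ih _ (h ▸ hlt) hi' rfl).trans hle

/-- The support of an involution has at most as many elements as its rank. -/
lemma two_mul_card_supp_le {n : ℕ} {u : Equiv.Perm (Fin n)} (hi : IsInvolution u) :
    2 * (supp u).card ≤ invCount u + excCount u := by
  induction h : invCount u using Nat.strong_induction_on generalizing u with
  | _ k ih =>
    by_cases hu : u = 1
    · have : supp u = ∅ := by simp [supp, hu, Pres]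
      simp [this]
    · obtain ⟨a, b, u', -, hi', hle, hlt, hr, hp, -⟩ := exists_cover hi hu
      have h1 := ih _ (h ▸ hlt) hi' rfl
      have h2 : supp u ⊆ insert a (supp u') := by
        intro j hj
        simp only [supp, Finset.mem_filter, Finset.mem_univ, true_and, Finset.mem_insert]
          at hj ⊢
        by_contra! hc
        exact hj (hp j hc.1 hc.2)
      have h3 := (Finset.card_le_card h2).trans (Finset.card_insert_le _ _)
      omega

/-- In a Boolean ideal, the rank of `w` is at most the size of its support: the saturated chain
given by `exists_cover` bounds the rank by the rank `m` of the Boolean lattice, and the `m` atoms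
are distinct adjacent transpositions below `w`. -/
lemma le_two_mul_card_supp {n : ℕ} {w : Equiv.Perm (Fin n)} (hw : IsInvolution w)
    (hb : IsBooleanInvolution w) : invCount w + excCount w ≤ 2 * (supp w).card := by
  obtain ⟨m, f, hf⟩ := hb
  have chain : ∀ (k : ℕ) (u : _) (hu : IsInvolution u ∧ BruhatLE u w), invCount u = k →
      invCount u + excCount u ≤ 2 * (f ⟨u, hu⟩).card := by
    intro k
    induction k using Nat.strong_induction_on with
    | _ k ih =>
      intro u hu hk
      by_cases h1 : u = 1
      · simp [h1, invCount, excCount, Finset.filter_false_of_mem]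
        rw [Finset.filter_false_of_mem (fun p _ h => absurd h.1 (not_lt_of_gt h.2))]
        simp
      · obtain ⟨a, b, u', -, hi', hle, hlt, hr, -⟩ := exists_cover hu.1 h1
        have h2 := ih _ (hk ▸ hlt) u' ⟨hi', hle.trans hu.2⟩ rfl
        have h3 : f ⟨u', hi', hle.trans hu.2⟩ ⊂ f ⟨u, hu⟩ := by
          refine lt_of_le_of_ne ((hf _ _).1 hle) fun he => ?_
          have := congrArg Subtype.val (f.injective he)
          simp only at this
          rw [this] at hlt
          omega
        have := Finset.card_lt_card h3
        omega
  have hm := chain _ w ⟨hw, .refl w⟩ rfl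
  have hm' : (f ⟨w, hw, .refl w⟩).card ≤ m := by
    simpa using Finset.card_le_univ (f ⟨w, hw, .refl w⟩)
  suffices m ≤ (supp w).card by omega
  let e : {u : Equiv.Perm (Fin n) // IsInvolution u ∧ BruhatLE u w} :=
    ⟨1, isInvolution_one, one_bruhatLE hw⟩
  have he : f e = ∅ := by
    have := (hf e (f.symm ∅)).1 (one_bruhatLE (f.symm ∅).2.1)
    simpa using this
  have atom : ∀ x : Fin m, ∃ a b : Fin n, (b : ℕ) = a + 1 ∧
      (f.symm {x}).1 = Equiv.swap a b := by
    intro x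
    have hne : (f.symm {x}).1 ≠ 1 := by
      intro h
      have h' : f.symm {x} = e := Subtype.ext h
      have := congrArg f h'
      rw [he, Equiv.apply_symm_apply] at this
      simp at this
    obtain ⟨a, b, u', hab, hi', hle, hlt, -, -, hs⟩ := exists_cover (f.symm {x}).2.1 hne
    refine ⟨a, b, hab, hs ?_⟩
    let v : {u : Equiv.Perm (Fin n) // IsInvolution u ∧ BruhatLE u w} :=
      ⟨u', hi', hle.trans (f.symm {x}).2.2⟩
    have h1 : f v ⊆ {x} := by simpa using (hf v (f.symm {x})).1 hle
    rcases Finset.subset_singleton_iff.1 h1 with h2 | h2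
    · exact congrArg Subtype.val (f.injective (h2.trans he.symm))
    · have h3 : v = f.symm {x} := by rw [← h2, Equiv.symm_apply_apply]
      have h4 : u' = (f.symm {x}).1 := congrArg Subtype.val h3
      rw [← h4] at hlt
      omega
  choose a b hab hs using atom
  have hinj : Function.Injective a := by
    intro x y hxy
    have hb' : b x = b y := Fin.ext (by rw [hab, hab, hxy])
    have : f.symm {x} = f.symm {y} := Subtype.ext (by rw [hs, hs, hxy, hb'])
    simpa using f.symm.injective this
  have hmem : ∀ x, a x ∈ supp w := by
    intro x
    simp only [supp, Finset.mem_filter, Finset.mem_univ, true_and]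
    intro hp
    have := (hp.of_le (f.symm {x}).2.2) (a x) le_rfl
    rw [hs, Equiv.swap_apply_left] at this
    have := hab x
    grind
  simpa using Finset.card_le_card_of_injOn (s := Finset.univ) a (fun x _ => hmem x)
    hinj.injOn

/-! ### Heights of the lattice path -/

/-- The height of the path after step `i` is the number of `j ≤ i` with `w j > i`: the steps at
`j` and `w j` cancel when both are at most `i`. -/
lemma height_eq {n : ℕ} {w : Equiv.Perm (Fin n)} (hw : IsInvolution w) (i : Fin n) :
    (∑ j ∈ Finset.univ.filter (fun j : Fin n => (j : ℕ) < (i : ℕ) + 1), motzkinStep w j) =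
      ((Finset.univ.filter fun j : Fin n => j ≤ i ∧ i < w j).card : ℤ) := by
  have hww : ∀ x, w (w x) = x := fun x => by
    simpa using congrArg (fun e : Equiv.Perm (Fin n) => e x) hw
  rw [← Finset.sum_filter_add_sum_filter_not _ (fun j => w j ≤ i)]
  have h1 : ∑ j ∈ (Finset.univ.filter (fun j : Fin n => (j : ℕ) < (i : ℕ) + 1)).filter
      (fun j => w j ≤ i), motzkinStep w j = 0 := by
    refine Finset.sum_involution (fun j _ => w j) ?_ ?_ ?_ ?_
    · intro j _
      simp only [motzkinStep, hww]
      grind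
    · intro j _ h1 h2
      simp [motzkinStep, h2] at h1
    · intro j hj
      simp only [Finset.mem_filter, Finset.mem_univ, true_and, hww] at hj ⊢
      grind
    · exact fun j _ => hww j
  have h2 : (Finset.univ.filter (fun j : Fin n => (j : ℕ) < (i : ℕ) + 1)).filter
      (fun j => ¬ w j ≤ i) = Finset.univ.filter fun j : Fin n => j ≤ i ∧ i < w j := by
    ext j
    simp only [Finset.mem_filter, Finset.mem_univ, true_and]
    grind
  rw [h1, h2, zero_add, Finset.card_eq_sum_ones, Nat.cast_sum]
  refine Finset.sum_congr rfl fun j hj => ?_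
  simp only [Finset.mem_filter, Finset.mem_univ, true_and] at hj
  simp only [motzkinStep]
  grind

/-- Let `w ∈ I(Sₙ)` be a Boolean involution and let `α(w)` be the number of
indices `i ∈ [n]` such that the path `ψ(w)` passes through the point `(i, 0)`,
equivalently (as asserted by the first conjunct) the number of `i ∈ [n]` with
`w j ≤ i` for all `j ≤ i`.  Then the rank of `w` satisfies `ρ(w) = n - α(w)`,
that is, `(inv(w) + exc(w))/2 = n - α(w)`. -/
theorem rank_eq_n_sub_touches {n : ℕ} (w : Equiv.Perm (Fin n))
    (hw : IsInvolution w) (hb : IsBooleanInvolution w) :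
    (∀ i : Fin n,
      ((∑ j ∈ Finset.univ.filter (fun j : Fin n => (j : ℕ) < (i : ℕ) + 1), motzkinStep w j) = 0
        ↔ ∀ j : Fin n, j ≤ i → w j ≤ i)) ∧
    (invCount w + excCount w) / 2 =
      n - (Finset.univ.filter fun i : Fin n =>
        (∑ j ∈ Finset.univ.filter (fun j : Fin n => (j : ℕ) < (i : ℕ) + 1),
          motzkinStep w j) = 0).card := by
  have key : ∀ i : Fin n,
      ((∑ j ∈ Finset.univ.filter (fun j : Fin n => (j : ℕ) < (i : ℕ) + 1), motzkinStep w j) = 0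
        ↔ ∀ j : Fin n, j ≤ i → w j ≤ i) := by
    intro i
    rw [height_eq hw, Nat.cast_eq_zero, Finset.card_eq_zero, Finset.filter_eq_empty_iff]
    simp
  refine ⟨key, ?_⟩
  have h1 := two_mul_card_supp_le hw
  have h2 := le_two_mul_card_supp hw hb
  have h3 := Finset.card_filter_add_card_filter_not (s := (Finset.univ : Finset (Fin n)))
    (fun i : Fin n =>
      (∑ j ∈ Finset.univ.filter (fun j : Fin n => (j : ℕ) < (i : ℕ) + 1), motzkinStep w j) = 0)
  have h4 : (Finset.univ.filter fun i : Fin n =>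
      ¬ (∑ j ∈ Finset.univ.filter (fun j : Fin n => (j : ℕ) < (i : ℕ) + 1),
        motzkinStep w j) = 0) = supp w := by
    ext i
    simp only [supp, Finset.mem_filter, Finset.mem_univ, true_and]
    rw [key, Pres]
  rw [h4, Finset.card_univ, Fintype.card_fin] at h3
  omega
end
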